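/- Given Steiner triple systems V and W, there is an integer N such that for every integer u with u ≥ N and u ≡ 1 or 3 (mod 6), there exists a Steiner triple system U on u points containing a subsystem W' isomorphic to W and a subsystem V'' isomorphic to V with W' ∩ V'' = ∅, such that V'' is invariant under Aut U and the restriction map from Aut U to Aut V'' is a group isomorphism (Aut U induces the full group Aut V'' and Aut U ≅ Aut V''). -/

import Mathlib

open Finset

noncomputable section
open scoped Classical

/-- `T` is the set of triples of a Steiner triple system on the finite type `α`:
every pair of distinct points lies in exactly one triple. -/
def IsSTS {α : Type*} (T : Finset (Finset α)) : Prop :=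
  (∀ t ∈ T, t.card = 3) ∧
    ∀ p q : α, p ≠ q → ∃! t : Finset α, t ∈ T ∧ p ∈ t ∧ q ∈ t

/-- `T` is the set of triples of a partial Steiner triple system on `α`:
every pair of distinct points lies in at most one triple. -/
def IsPSTS {α : Type*} (T : Finset (Finset α)) : Prop :=
  (∀ t ∈ T, t.card = 3) ∧
    ∀ p q : α, p ≠ q → ∀ t₁ ∈ T, ∀ t₂ ∈ T, p ∈ t₁ → q ∈ t₁ → p ∈ t₂ → q ∈ t₂ → t₁ = t₂

/-- `W` is a (closed) subsystem of the triple system `T`. -/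
def IsSub {α : Type*} (T : Finset (Finset α)) (W : Finset α) : Prop :=
  ∀ t ∈ T, 2 ≤ (t ∩ W).card → t ⊆ W

/-- `g` is an automorphism of the triple system `T`. -/
def IsAut {α : Type*} (T : Finset (Finset α)) (g : Equiv.Perm α) : Prop :=
  ∀ t : Finset α, t ∈ T ↔ t.image g ∈ T

/-- The automorphism group of a triple system, as a subgroup of the permutation group. -/
def autGroup {α : Type*} (T : Finset (Finset α)) : Subgroup (Equiv.Perm α) where
  carrier := {g : Equiv.Perm α | IsAut T g}
  one_mem' := by
    intro t
    simp
  mul_mem' := by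
    intro a b ha hb t
    have h1 := hb t
    have h2 := ha (t.image b)
    have key : t.image ⇑(a * b) = (t.image ⇑b).image ⇑a := by
      rw [Equiv.Perm.coe_mul, Finset.image_image]
    rw [key, ← h2]
    exact h1
  inv_mem' := by
    intro a ha t
    have h := ha (t.image ⇑a⁻¹)
    have key : (t.image ⇑a⁻¹).image ⇑a = t := by
      rw [Finset.image_image]
      have hc : (⇑a ∘ ⇑a⁻¹) = id := by
        funext x
        simp
      rw [hc, Finset.image_id]
    rw [key] at h
    exact h.symm

/-- `φ` embeds the triple system `S` onto a subsystem of `T`: it is injective, maps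
triples of `S` to triples of `T`, and the triples of `T` inside the image of `φ` are
precisely the images of the triples of `S`. -/
def IsCopy {α β : Type*} [Fintype α] (S : Finset (Finset α)) (T : Finset (Finset β))
    (φ : α → β) : Prop :=
  Function.Injective φ ∧ (∀ s ∈ S, s.image φ ∈ T) ∧
    ∀ t ∈ T, t ⊆ Finset.univ.image φ → ∃ s ∈ S, t = s.image φ

/-- The point set `W` is invariant under every automorphism of `T`. -/
def AutInvariant {β : Type*} (T : Finset (Finset β)) (W : Finset β) : Prop :=
  ∀ g : Equiv.Perm β, IsAut T g → W.image g = W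

/-- For the copy of `S` inside `T` given by `φ`, restriction gives a group isomorphism
from `Aut T` onto `Aut S`: every automorphism of `T` induces (via `φ`) an automorphism
of `S`, and every automorphism of `S` is induced by exactly one automorphism of `T`. -/
def AutRestrictIso {α β : Type*} (T : Finset (Finset β)) (S : Finset (Finset α))
    (φ : α → β) : Prop :=
  (∀ g : Equiv.Perm β, IsAut T g →
      ∃ h : Equiv.Perm α, IsAut S h ∧ ∀ x : α, g (φ x) = φ (h x)) ∧
    ∀ h : Equiv.Perm α, IsAut S h →
      ∃! g : Equiv.Perm β, IsAut T g ∧ ∀ x : α, g (φ x) = φ (h x)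

/-- `φ` embeds `S` as an `Aut T`-invariant subsystem of `T` on which `Aut T` induces
the full automorphism group of `S`, with `Aut T ≅ Aut S` via restriction. -/
def FullEmbedding {α β : Type*} [Fintype α] (S : Finset (Finset α)) (T : Finset (Finset β))
    (φ : α → β) : Prop :=
  IsCopy S T φ ∧ AutInvariant T (Finset.univ.image φ) ∧ AutRestrictIso T S φ

/-- The points of the projective space `PG(n,2)`: nonzero vectors of `GF(2)^{n+1}`. -/
abbrev PGPoint (n : ℕ) := {x : Fin (n + 1) → ZMod 2 // x ≠ 0}

/-- The lines of `PG(n,2)`: 3-sets of nonzero vectors summing to `0`. -/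
def PGTriples (n : ℕ) : Finset (Finset (PGPoint n)) :=
  Finset.univ.filter fun t : Finset (PGPoint n) =>
    t.card = 3 ∧ ∑ v ∈ t, (v : Fin (n + 1) → ZMod 2) = 0

/-- The smallest subsystem of `T` containing the point set `P`. -/
def GeneratedSub {α : Type*} [Fintype α] (T : Finset (Finset α)) (P : Finset α) : Finset α :=
  Finset.univ.filter fun x => ∀ W : Finset α, IsSub T W → P ⊆ W → x ∈ W

/-- `W` is a subsystem of `T` isomorphic to `PG(n,2)`. -/
def IsPGSub {α : Type*} [Fintype α] (n : ℕ) (T : Finset (Finset α)) (W : Finset α) : Prop :=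
  ∃ φ : PGPoint n → α, IsCopy (PGTriples n) T φ ∧ Finset.univ.image φ = W

/-- A triple system is `PG(2,2)`-paired if any two distinct points lie in at least two
subsystems isomorphic to `PG(2,2)`. -/
def PG22Paired {α : Type*} [Fintype α] (T : Finset (Finset α)) : Prop :=
  ∀ p q : α, p ≠ q → ∃ W₁ W₂ : Finset α, W₁ ≠ W₂ ∧
    (p ∈ W₁ ∧ q ∈ W₁ ∧ IsPGSub 2 T W₁) ∧ p ∈ W₂ ∧ q ∈ W₂ ∧ IsPGSub 2 T W₂

/-- `T` is `PG(3,2)`-2-pointed with respect to the points `p, q`: any four points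
including `p` and `q` generate a subsystem isomorphic to `PG(2,2)` or `PG(3,2)`. -/
def PG32TwoPointed {α : Type*} [Fintype α] (T : Finset (Finset α)) (p q : α) : Prop :=
  p ≠ q ∧ ∀ s : Finset α, s.card = 4 → p ∈ s → q ∈ s →
    IsPGSub 2 T (GeneratedSub T s) ∨ IsPGSub 3 T (GeneratedSub T s)

/-- The copy of `Y` inside `2Y+1`. -/
def dp0 {γ : Type*} (a : γ) : γ ⊕ γ ⊕ Unit := Sum.inl a

/-- The disjoint copy `Y₁` of `Y` inside `2Y+1`. -/
def dp1 {γ : Type*} (a : γ) : γ ⊕ γ ⊕ Unit := Sum.inr (Sum.inl a)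

/-- The extra point `*` of `2Y+1`. -/
def dpStar {γ : Type*} : γ ⊕ γ ⊕ Unit := Sum.inr (Sum.inr ())

/-- The triples of the Steiner triple system `2Y+1` built from a system `Y` with
triple set `T`. -/
def DoubleTriples {γ : Type*} [Fintype γ] (T : Finset (Finset γ)) :
    Finset (Finset (γ ⊕ γ ⊕ Unit)) :=
  Finset.univ.filter fun t : Finset (γ ⊕ γ ⊕ Unit) =>
    (∃ s ∈ T, t = s.image dp0) ∨
    (∃ a : γ, t = {dpStar, dp0 a, dp1 a}) ∨
    (∃ a b c : γ, ({a, b, c} : Finset γ) ∈ T ∧ t = {dp1 a, dp1 b, dp0 c})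

/-- The triples of the direct product of two triple systems. -/
def ProdTriples {α β : Type*} [Fintype α] [Fintype β]
    (TA : Finset (Finset α)) (TB : Finset (Finset β)) : Finset (Finset (α × β)) :=
  Finset.univ.filter fun t : Finset (α × β) =>
    (∃ a : α, ∃ s ∈ TB, t = s.image fun b => (a, b)) ∨
    (∃ b : β, ∃ s ∈ TA, t = s.image fun a => (a, b)) ∨
    (∃ a₁ a₂ a₃ : α, ∃ b₁ b₂ b₃ : β, ({a₁, a₂, a₃} : Finset α) ∈ TA ∧
      ({b₁, b₂, b₃} : Finset β) ∈ TB ∧ t = {(a₁, b₁), (a₂, b₂), (a₃, b₃)})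

/-- The triples of Moore's construction `U = X ∪ (V × A)`.  Here `TX` (on `δ`), `TV`
(on `α`), `TY` (on `γ`) are the triple sets of `X`, `V`, `Y`; `j : δ → γ` embeds `X`
as a subsystem of `Y` and `ℓ : A → γ` labels `Y − X` by the group `A`. -/
def MooreTriples {δ α γ A : Type*} [Fintype δ] [Fintype α] [Fintype A] [Group A]
    (TX : Finset (Finset δ)) (TV : Finset (Finset α)) (TY : Finset (Finset γ))
    (j : δ → γ) (ℓ : A → γ) : Finset (Finset (δ ⊕ α × A)) :=
  Finset.univ.filter fun t : Finset (δ ⊕ α × A) =>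
    (∃ s ∈ TX, t = s.image Sum.inl) ∨
    (∃ v : α, ∃ a₁ a₂ : A, ∃ x : δ, ({ℓ a₁, ℓ a₂, j x} : Finset γ) ∈ TY ∧
      t = {Sum.inr (v, a₁), Sum.inr (v, a₂), Sum.inl x}) ∨
    (∃ v : α, ∃ a₁ a₂ a₃ : A, ({ℓ a₁, ℓ a₂, ℓ a₃} : Finset γ) ∈ TY ∧
      t = {Sum.inr (v, a₁), Sum.inr (v, a₂), Sum.inr (v, a₃)}) ∨
    (∃ v₁ v₂ v₃ : α, ∃ a₁ a₂ a₃ : A, ({v₁, v₂, v₃} : Finset α) ∈ TV ∧ a₁ * a₂ * a₃ = 1 ∧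
      t = {Sum.inr (v₁, a₁), Sum.inr (v₂, a₂), Sum.inr (v₃, a₃)})

/-- The hypotheses of Moore's construction: `Y` and `V` are Steiner triple systems,
`A` is a cyclic group, `j` embeds `X` as a subsystem of `Y` (with triple set `TX`),
and `ℓ` is a bijective labeling of `Y − X` by `A`. -/
def MooreSetup {δ α γ A : Type*} [Fintype δ] [Group A]
    (TX : Finset (Finset δ)) (TV : Finset (Finset α)) (TY : Finset (Finset γ))
    (j : δ → γ) (ℓ : A → γ) : Prop :=
  IsSTS TY ∧ IsSTS TV ∧ IsCyclic A ∧ Function.Injective j ∧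
    IsSub TY (Finset.univ.image j) ∧ IsCopy TX TY j ∧
    Function.Injective ℓ ∧ Set.range ℓ = (Set.range j)ᶜ

/-- The subsystem `Y_v = X ∪ (v × A)` of Moore's construction. -/
def MooreY {δ α A : Type*} [Fintype δ] [Fintype A] (v : α) : Finset (δ ⊕ α × A) :=
  (Finset.univ.image (Sum.inl : δ → δ ⊕ α × A)) ∪
    Finset.univ.image fun a : A => (Sum.inr (v, a) : δ ⊕ α × A)

/-- A subsystem of type (3.1) of Moore's construction, where `ε` denotes the unique
involution `−1` of `A`: the seven points `x, (v_i, a_i), (v_i, −a_i)` for a triple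
`{v₁,v₂,v₃}` of `V`, with `a₁a₂a₃ = 1` and `{a_i, −a_i, x}` a triple of `Y`. -/
def MooreType31 {δ α γ A : Type*} [Group A] (TV : Finset (Finset α))
    (TY : Finset (Finset γ)) (j : δ → γ) (ℓ : A → γ) (ε : A)
    (W : Finset (δ ⊕ α × A)) : Prop :=
  ∃ v₁ v₂ v₃ : α, ∃ a₁ a₂ a₃ : A, ∃ x : δ,
    ({v₁, v₂, v₃} : Finset α) ∈ TV ∧ a₁ * a₂ * a₃ = 1 ∧
    ({ℓ a₁, ℓ (ε * a₁), j x} : Finset γ) ∈ TY ∧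
    ({ℓ a₂, ℓ (ε * a₂), j x} : Finset γ) ∈ TY ∧
    ({ℓ a₃, ℓ (ε * a₃), j x} : Finset γ) ∈ TY ∧
    W = {Sum.inl x, Sum.inr (v₁, a₁), Sum.inr (v₁, ε * a₁), Sum.inr (v₂, a₂),
         Sum.inr (v₂, ε * a₂), Sum.inr (v₃, a₃), Sum.inr (v₃, ε * a₃)}

/-- The point set of a family of triples. -/
def ptsOf {β : Type*} (T : Finset (Finset β)) : Finset β := T.sup id

/-- Adjacency of triples: two distinct triples of `T` meeting in a point. -/
def TriAdj {β : Type*} (T : Finset (Finset β)) (t s : Finset β) : Prop :=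
  t ∈ T ∧ s ∈ T ∧ t ≠ s ∧ (t ∩ s).Nonempty

/-- A partial Steiner triple system is cyclic if the graph whose vertices are its
triples, two joined when they meet, is a cycle (equivalently: it has at least three
triples, every triple meets exactly two others, and the graph is connected). -/
def IsCyclicPSTS {β : Type*} (T : Finset (Finset β)) : Prop :=
  3 ≤ T.card ∧ (∀ t ∈ T, (T.filter fun s => s ≠ t ∧ (s ∩ t).Nonempty).card = 2) ∧
    ∀ t ∈ T, ∀ s ∈ T, Relation.ReflTransGen (TriAdj T) t s

/-- The partial Steiner triple system `Q(z)` (for the parameter `n`), with triple set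
`T`, point set `P` and distinguished point `z`: two cyclic PSTSs `C₁, C₂` on
`2n+4` and `2n+6` points meeting exactly in the point `z`, which lies in two triples
of each, triples `{z, z'_i, z_i}` of `C_i` with `z'_i` in two triples of `C_i`, and a
new point `z'` in the single additional triple `{z'_1, z', z'_2}`. -/
def IsQ {β : Type*} (n : ℕ) (T : Finset (Finset β)) (P : Finset β) (z : β) : Prop :=
  ∃ C₁ C₂ : Finset (Finset β), ∃ z' z₁' z₂' z₁ z₂ : β,
    IsPSTS T ∧ IsCyclicPSTS C₁ ∧ IsCyclicPSTS C₂ ∧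
    (ptsOf C₁).card = 2 * n + 4 ∧ (ptsOf C₂).card = 2 * n + 6 ∧
    ptsOf C₁ ∩ ptsOf C₂ = {z} ∧
    (C₁.filter fun t => z ∈ t).card = 2 ∧ (C₂.filter fun t => z ∈ t).card = 2 ∧
    ({z, z₁', z₁} : Finset β) ∈ C₁ ∧ (C₁.filter fun t => z₁' ∈ t).card = 2 ∧
    ({z, z₂', z₂} : Finset β) ∈ C₂ ∧ (C₂.filter fun t => z₂' ∈ t).card = 2 ∧
    z' ∉ ptsOf C₁ ∪ ptsOf C₂ ∧
    T = C₁ ∪ C₂ ∪ {({z₁', z', z₂'} : Finset β)} ∧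
    P = ptsOf C₁ ∪ ptsOf C₂ ∪ {z'}

/-- Nonempty subsets of `β`: the points of the projective space `P` over `GF(2)`
built on a point set `β`. -/
abbrev NESet (β : Type*) := {s : Finset β // s.Nonempty}

/-- The triples of the projective space over `GF(2)` on the nonempty subsets of `β`:
3-sets of subsets with empty symmetric difference. -/
def sdTriples (β : Type*) [Fintype β] : Finset (Finset (NESet β)) :=
  Finset.univ.filter fun t : Finset (NESet β) =>
    ∃ a b c : NESet β, a ≠ b ∧ a ≠ c ∧ b ≠ c ∧ t = {a, b, c} ∧
      symmDiff (symmDiff a.1 b.1) c.1 = ∅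

/-- The singleton `{a}` as a point of the projective space. -/
def sEl {β : Type*} (a : β) : NESet β := ⟨{a}, Finset.singleton_nonempty a⟩

/-- The pair `{a,b}` as a point of the projective space. -/
def pEl {β : Type*} (a b : β) : NESet β := ⟨{a, b}, Finset.insert_nonempty a {b}⟩

/-- The triples of `P` removed in Cameron's construction, for each triple `{a,b,c}`
of `V'`. -/
def removedTriples {β : Type*} [Fintype β] (TV' : Finset (Finset β)) :
    Finset (Finset (NESet β)) :=
  Finset.univ.filter fun t : Finset (NESet β) =>
    ∃ a b c : β, ({a, b, c} : Finset β) ∈ TV' ∧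
      (t = {pEl a b, pEl a c, pEl b c} ∨ t = {sEl a, sEl b, pEl a b} ∨
       t = {sEl a, sEl c, pEl a c} ∨ t = {sEl b, sEl c, pEl b c})

/-- The new triples of Cameron's construction, for each triple `{a,b,c}` of `V'`. -/
def addedTriples {β : Type*} [Fintype β] (TV' : Finset (Finset β)) :
    Finset (Finset (NESet β)) :=
  Finset.univ.filter fun t : Finset (NESet β) =>
    ∃ a b c : β, ({a, b, c} : Finset β) ∈ TV' ∧
      (t = {sEl a, sEl b, sEl c} ∨ t = {sEl a, pEl a b, pEl a c} ∨
       t = {sEl b, pEl a b, pEl b c} ∨ t = {sEl c, pEl a c, pEl b c})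

/-- The Steiner triple system `U` of Cameron's construction obtained from the
projective space `P` and the partial system `V'`. -/
def CameronSTS {β : Type*} [Fintype β] (TV' : Finset (Finset β)) :
    Finset (Finset (NESet β)) :=
  (sdTriples β \ removedTriples TV') ∪ addedTriples TV'

/-- A Steiner quasigroup: the algebraic form of a Steiner triple system, in which `op a b` is
the third point of the triple through `a ≠ b`, and `op a a = a`. -/
structure Squag (α : Type*) where
  /-- the third point of the triple through two points -/
  op : α → α → α
  op_self : ∀ a, op a a = a
  op_comm : ∀ a b, op a b = op b a
  op_op : ∀ a b, op a (op a b) = b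

namespace Squag

variable {α β γ : Type*}

/-- A map commuting with the operations. -/
def IsHom (s : Squag α) (t : Squag β) (f : α → β) : Prop :=
  ∀ a b, f (s.op a b) = t.op (f a) (f b)

/-- A point set closed under the operation, that is, a subsystem. -/
def IsClosed (s : Squag α) (S : Finset α) : Prop :=
  ∀ a ∈ S, ∀ b ∈ S, s.op a b ∈ S

/-- The triples of a Steiner quasigroup. -/
def triples [Fintype α] (s : Squag α) : Finset (Finset α) :=
  Finset.univ.filter fun t => ∃ a b, a ≠ b ∧ t = {a, b, s.op a b}

lemma op_ne_left (s : Squag α) {a b : α} (h : a ≠ b) : s.op a b ≠ a := by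
  intro h'
  apply h
  have := s.op_op a b
  rw [h', s.op_self] at this
  exact this

lemma op_ne_right (s : Squag α) {a b : α} (h : a ≠ b) : s.op a b ≠ b := by
  rw [s.op_comm]
  exact s.op_ne_left h.symm

lemma op_left_injective (s : Squag α) (a : α) : Function.Injective (s.op a) := by
  intro b c h
  rw [← s.op_op a b, h, s.op_op]

/-- Transport of the operation along a bijection. -/
def map (s : Squag α) (e : α ≃ β) : Squag β where
  op a b := e (s.op (e.symm a) (e.symm b))
  op_self a := by simp [s.op_self]
  op_comm a b := by rw [s.op_comm]
  op_op a b := by simp [s.op_op]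

lemma isHom_map (s : Squag α) (e : α ≃ β) : IsHom s (s.map e) e := by
  intro a b
  simp [map]

lemma IsHom.comp {s : Squag α} {t : Squag β} {r : Squag γ} {g : β → γ} {f : α → β}
    (hg : IsHom t r g) (hf : IsHom s t f) : IsHom s r (g ∘ f) := by
  intro a b
  simp [hf a b, hg _ _]

lemma IsHom.symm {s : Squag α} {t : Squag β} {g : α ≃ β} (hg : IsHom s t g) :
    IsHom t s g.symm := by
  intro a b
  apply g.injective
  rw [hg]
  simp

section Triples

variable [Fintype α] [Fintype β]

lemma mem_triples (s : Squag α) {t : Finset α} :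
    t ∈ s.triples ↔ ∃ a b, a ≠ b ∧ t = {a, b, s.op a b} := by
  simp [triples]

lemma eq_of_mem_triples (s : Squag α) {t : Finset α} (ht : t ∈ s.triples) {p q : α}
    (hp : p ∈ t) (hq : q ∈ t) (hpq : p ≠ q) : t = {p, q, s.op p q} := by
  obtain ⟨a, b, hab, rfl⟩ := s.mem_triples.1 ht
  have h1 : s.op b (s.op a b) = a := by rw [s.op_comm a b, s.op_op]
  have h2 : s.op (s.op a b) a = b := by rw [s.op_comm, s.op_op]
  have h3 : s.op (s.op a b) b = a := by rw [s.op_comm, h1]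
  simp only [Finset.mem_insert, Finset.mem_singleton] at hp hq
  have h0 : s.op b a = s.op a b := s.op_comm b a
  rcases hp with hp | hp | hp <;> rcases hq with hq | hq | hq <;>
    first
    | exact absurd (hp.trans hq.symm) hpq
    | (rw [hp, hq]; done)
    | (rw [hp, hq]; simp only [s.op_op, h0, h1, h2, h3]; ext x; simp; done)
    | (rw [hp, hq]; simp only [s.op_op, h0, h1, h2, h3]; ext x; simp; tauto)

lemma isSTS_triples (s : Squag α) : IsSTS s.triples := by
  refine ⟨?_, ?_⟩
  · intro t ht
    obtain ⟨a, b, hab, rfl⟩ := s.mem_triples.1 ht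
    rw [Finset.card_eq_three]
    exact ⟨a, b, s.op a b, hab, (s.op_ne_left hab).symm, (s.op_ne_right hab).symm, rfl⟩
  · intro p q hpq
    refine ⟨{p, q, s.op p q}, ⟨s.mem_triples.2 ⟨p, q, hpq, rfl⟩, by simp, by simp⟩, ?_⟩
    rintro t ⟨ht, hp, hq⟩
    exact s.eq_of_mem_triples ht hp hq hpq

lemma IsHom.image_mem_triples {s : Squag α} {t : Squag β} {f : α → β} (hf : IsHom s t f)
    (hi : Function.Injective f) {T : Finset α} (hT : T ∈ s.triples) :
    T.image f ∈ t.triples := by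
  obtain ⟨a, b, hab, rfl⟩ := s.mem_triples.1 hT
  refine t.mem_triples.2 ⟨f a, f b, fun h => hab (hi h), ?_⟩
  simp [hf a b, Finset.image_insert]

lemma isCopy_of_isHom {s : Squag α} {t : Squag β} {f : α → β} (hf : IsHom s t f)
    (hi : Function.Injective f) : IsCopy s.triples t.triples f := by
  refine ⟨hi, fun T hT => hf.image_mem_triples hi hT, ?_⟩
  intro T hT hsub
  obtain ⟨a, b, hab, rfl⟩ := t.mem_triples.1 hT
  obtain ⟨a', -, rfl⟩ := Finset.mem_image.1 (hsub (by simp : a ∈ _))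
  obtain ⟨b', -, rfl⟩ := Finset.mem_image.1 (hsub (by simp : b ∈ _))
  refine ⟨{a', b', s.op a' b'}, s.mem_triples.2 ⟨a', b', fun h => hab (by rw [h]), rfl⟩, ?_⟩
  simp [hf a' b', Finset.image_insert]

lemma isSub_of_isHom {s : Squag α} {t : Squag β} {f : α → β} (hf : IsHom s t f) :
    IsSub t.triples (Finset.univ.image f) := by
  intro T hT hcard
  obtain ⟨a, ha, b, hb, hab⟩ := Finset.one_lt_card.1 hcard
  obtain ⟨haT, ha'⟩ := Finset.mem_inter.1 ha
  obtain ⟨hbT, hb'⟩ := Finset.mem_inter.1 hb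
  rw [t.eq_of_mem_triples hT haT hbT hab]
  obtain ⟨a', -, rfl⟩ := Finset.mem_image.1 ha'
  obtain ⟨b', -, rfl⟩ := Finset.mem_image.1 hb'
  intro x hx
  simp only [Finset.mem_insert, Finset.mem_singleton] at hx
  rcases hx with rfl | rfl | rfl
  · exact ha'
  · exact hb'
  · rw [← hf]; exact Finset.mem_image_of_mem _ (Finset.mem_univ _)

lemma isAut_iff_isHom (s : Squag α) (g : Equiv.Perm α) : IsAut s.triples g ↔ IsHom s s g := by
  constructor
  · intro h a b
    rcases eq_or_ne a b with rfl | hab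
    · simp [s.op_self]
    have h1 := (h {a, b, s.op a b}).1 (s.mem_triples.2 ⟨a, b, hab, rfl⟩)
    have hg : g a ≠ g b := fun h => hab (g.injective h)
    have h2 := s.eq_of_mem_triples h1 (p := g a) (q := g b) (by simp) (by simp) hg
    have h3 : g (s.op a b) ∈ ({a, b, s.op a b} : Finset α).image g := by simp
    rw [h2] at h3
    simp only [Finset.mem_insert, Finset.mem_singleton] at h3
    rcases h3 with h3 | h3 | h3
    · exact absurd (g.injective h3) (s.op_ne_left hab)
    · exact absurd (g.injective h3) (s.op_ne_right hab)
    · exact h3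
  · intro h t
    refine ⟨fun ht => h.image_mem_triples g.injective ht, fun ht => ?_⟩
    have := h.symm.image_mem_triples g.symm.injective ht
    rw [Finset.image_image] at this
    simpa using this

end Triples

/-- Every Steiner triple system is the system of triples of a Steiner quasigroup. -/
lemma exists_of_isSTS [Fintype α] {T : Finset (Finset α)} (hT : IsSTS T) :
    ∃ s : Squag α, s.triples = T := by
  have key : ∀ a b : α, ∃ c, (a = b → c = a) ∧ (a ≠ b → c ≠ a ∧ c ≠ b ∧ {a, b, c} ∈ T) := by
    intro a b
    rcases eq_or_ne a b with rfl | hab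
    · exact ⟨a, by simp⟩
    obtain ⟨t, ⟨ht, ha, hb⟩, -⟩ := hT.2 a b hab
    obtain ⟨c, hc⟩ : ∃ c, (t.erase a).erase b = {c} := by
      rw [← Finset.card_eq_one, Finset.card_erase_of_mem (by simp [hb, hab.symm]),
        Finset.card_erase_of_mem ha, hT.1 t ht]
    have hct : c ∈ (t.erase a).erase b := by simp [hc]
    simp only [Finset.mem_erase] at hct
    refine ⟨c, fun h => absurd h hab, fun _ => ⟨hct.2.1, hct.1, ?_⟩⟩
    have : ({a, b, c} : Finset α) = t := by
      rw [← hc, Finset.insert_erase (by simp [hb, hab.symm]), Finset.insert_erase ha]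
    rwa [this]
  choose f hf1 hf2 using key
  have uniq : ∀ a b c : α, a ≠ b → c ≠ a → c ≠ b → {a, b, c} ∈ T → f a b = c := by
    intro a b c hab hca hcb hc
    obtain ⟨h1, h2, h3⟩ := hf2 a b hab
    have heq := (hT.2 a b hab).unique ⟨h3, by simp, by simp⟩ ⟨hc, by simp, by simp⟩
    have : f a b ∈ ({a, b, c} : Finset α) := by rw [← heq]; simp
    simp only [Finset.mem_insert, Finset.mem_singleton] at this
    tauto
  let s : Squag α :=
    { op := f
      op_self := fun a => hf1 a a rfl
      op_comm := by
        intro a b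
        rcases eq_or_ne a b with rfl | hab
        · rfl
        obtain ⟨h1, h2, h3⟩ := hf2 b a hab.symm
        exact uniq a b _ hab h2 h1 (by rwa [Finset.insert_comm])
      op_op := by
        intro a b
        rcases eq_or_ne a b with rfl | hab
        · rw [hf1 a a rfl, hf1 a a rfl]
        obtain ⟨h1, h2, h3⟩ := hf2 a b hab
        exact uniq a _ b h1.symm hab.symm h2.symm (by rwa [Finset.pair_comm]) }
  refine ⟨s, ?_⟩
  ext t
  rw [s.mem_triples]
  constructor
  · rintro ⟨a, b, hab, rfl⟩
    exact (hf2 a b hab).2.2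
  · intro ht
    obtain ⟨a, b, c, hab, hac, hbc, rfl⟩ := Finset.card_eq_three.1 (hT.1 t ht)
    exact ⟨a, b, hab, by rw [show s.op a b = c from uniq a b c hab hac.symm hbc.symm ht]⟩

section Moore

variable {α X A : Type*}

/-- The inclusion of the copy `X ∪ ({v} × A)` of `X ∪ A` in `X ∪ (α × A)`. -/
def lift (v : α) : X ⊕ A → X ⊕ α × A :=
  Sum.map id (Prod.mk v)

@[simp] lemma lift_inl (v : α) (x : X) : lift (A := A) v (Sum.inl x) = Sum.inl x := rfl

@[simp] lemma lift_inr (v : α) (a : A) : lift (X := X) v (Sum.inr a) = Sum.inr (v, a) := rfl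

lemma lift_injective (v : α) : Function.Injective (lift (X := X) (A := A) v) := by
  rintro (x | a) (y | b) h <;> simp_all

lemma exists_lift_or (v₀ : α) (p q : X ⊕ α × A) :
    (∃ v p' q', p = lift v p' ∧ q = lift v q') ∨
      ∃ v w a b, v ≠ w ∧ p = Sum.inr (v, a) ∧ q = Sum.inr (w, b) := by
  rcases p with x | ⟨v, a⟩ <;> rcases q with y | ⟨w, b⟩
  · exact Or.inl ⟨v₀, Sum.inl x, Sum.inl y, rfl, rfl⟩
  · exact Or.inl ⟨w, Sum.inl x, Sum.inr b, rfl, rfl⟩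
  · exact Or.inl ⟨v, Sum.inr a, Sum.inl y, rfl, rfl⟩
  · rcases eq_or_ne v w with rfl | h
    · exact Or.inl ⟨v, Sum.inr a, Sum.inr b, rfl, rfl⟩
    · exact Or.inr ⟨v, w, a, b, h, rfl, rfl⟩

variable [AddCommGroup A]

/-- The operation of Moore's construction on `X ∪ (α × A)`. -/
def mooreOp (V : Squag α) (sX : Squag X) (Y : Squag (X ⊕ A)) :
    X ⊕ α × A → X ⊕ α × A → X ⊕ α × A
  | Sum.inl x, Sum.inl y => Sum.inl (sX.op x y)
  | Sum.inl x, Sum.inr (v, a) => lift v (Y.op (Sum.inl x) (Sum.inr a))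
  | Sum.inr (v, a), Sum.inl x => lift v (Y.op (Sum.inr a) (Sum.inl x))
  | Sum.inr (v, a), Sum.inr (w, b) =>
      if v = w then lift v (Y.op (Sum.inr a) (Sum.inr b)) else Sum.inr (V.op v w, -a - b)

variable (V : Squag α) {sX : Squag X} {Y : Squag (X ⊕ A)}

lemma mooreOp_lift (hY : IsHom sX Y Sum.inl) (v : α) (p q : X ⊕ A) :
    mooreOp V sX Y (lift v p) (lift v q) = lift v (Y.op p q) := by
  rcases p with x | a <;> rcases q with y | b
  · rw [← hY]; rfl
  · rfl
  · rfl
  · simp [mooreOp]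

lemma mooreOp_of_ne {v w : α} (h : v ≠ w) (a b : A) :
    mooreOp V sX Y (Sum.inr (v, a)) (Sum.inr (w, b)) = Sum.inr (V.op v w, -a - b) := by
  simp [mooreOp, h]

variable (hY : IsHom sX Y Sum.inl)

/-- Moore's construction: a Steiner quasigroup on `X ∪ (α × A)` from Steiner quasigroups on
`α` and on `X ∪ A`, the latter having `X` as a subsystem. -/
def moore [Nonempty α] : Squag (X ⊕ α × A) where
  op := mooreOp V sX Y
  op_self p := by
    obtain ⟨v₀⟩ := ‹Nonempty α›
    rcases exists_lift_or v₀ p p with ⟨v, p', q', h, -⟩ | ⟨v, w, a, b, hvw, h, h'⟩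
    · rw [h, mooreOp_lift V hY, Y.op_self]
    · rw [h] at h'; simp at h'; exact absurd h'.1 hvw
  op_comm p q := by
    obtain ⟨v₀⟩ := ‹Nonempty α›
    rcases exists_lift_or v₀ p q with ⟨v, p', q', rfl, rfl⟩ | ⟨v, w, a, b, hvw, rfl, rfl⟩
    · rw [mooreOp_lift V hY, mooreOp_lift V hY, Y.op_comm]
    · rw [mooreOp_of_ne V hvw, mooreOp_of_ne V hvw.symm, V.op_comm, neg_sub_left, neg_sub_left]
      rw [add_comm]
  op_op p q := by
    obtain ⟨v₀⟩ := ‹Nonempty α›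
    rcases exists_lift_or v₀ p q with ⟨v, p', q', rfl, rfl⟩ | ⟨v, w, a, b, hvw, rfl, rfl⟩
    · rw [mooreOp_lift V hY, mooreOp_lift V hY, Y.op_op]
    · rw [mooreOp_of_ne V hvw, mooreOp_of_ne V (V.op_ne_left hvw).symm, V.op_op]
      simp

variable [Nonempty α]

lemma moore_lift (v : α) (p q : X ⊕ A) :
    (moore V hY).op (lift v p) (lift v q) = lift v (Y.op p q) :=
  mooreOp_lift V hY v p q

lemma moore_of_ne {v w : α} (h : v ≠ w) (a b : A) :
    (moore V hY).op (Sum.inr (v, a)) (Sum.inr (w, b)) = Sum.inr (V.op v w, -a - b) :=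
  mooreOp_of_ne (sX := sX) V h a b

lemma isHom_moore_inl : IsHom sX (moore V hY) Sum.inl := fun _ _ => rfl

lemma isHom_moore_zero : IsHom V (moore V hY) fun v => Sum.inr (v, 0) := by
  intro v w
  rcases eq_or_ne v w with rfl | h
  · rw [V.op_self, (moore V hY).op_self]
  · simp only
    rw [moore_of_ne V hY h]
    simp

end Moore

/-- The data needed to extend a Steiner quasigroup on `X` to one on `X ∪ B ∪ C`, when the
triples through a point of `X` match `B` with `C`. -/
structure Frame (X B C : Type*) where
  /-- the operation on `B` -/
  sB : Squag B
  /-- the matching attached to a point of `X` -/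
  mu : X → C ≃ B
  /-- the operation between `B` and `C` -/
  lam : B → C → X ⊕ C
  /-- the operation on `C` -/
  kap : C → C → B ⊕ C
  kap_self : ∀ c, kap c c = Sum.inr c
  kap_comm : ∀ c d, kap c d = kap d c
  lam_mu : ∀ x c, lam (mu x c) c = Sum.inl x
  mu_of_lam : ∀ b c x, lam b c = Sum.inl x → mu x c = b
  kap_of_lam : ∀ b c d, lam b c = Sum.inr d → kap c d = Sum.inl b
  lam_of_kap : ∀ b c d, kap c d = Sum.inl b → lam b c = Sum.inr d
  kap_of_kap : ∀ c d d', kap c d = Sum.inr d' → kap c d' = Sum.inr d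

namespace Frame

variable {X B C : Type*}

/-- The operation of the extension described by a frame. -/
def extendOp (F : Frame X B C) (sX : Squag X) : X ⊕ (B ⊕ C) → X ⊕ (B ⊕ C) → X ⊕ (B ⊕ C)
  | Sum.inl x, Sum.inl y => Sum.inl (sX.op x y)
  | Sum.inl x, Sum.inr (Sum.inl b) => Sum.inr (Sum.inr ((F.mu x).symm b))
  | Sum.inr (Sum.inl b), Sum.inl x => Sum.inr (Sum.inr ((F.mu x).symm b))
  | Sum.inl x, Sum.inr (Sum.inr c) => Sum.inr (Sum.inl (F.mu x c))
  | Sum.inr (Sum.inr c), Sum.inl x => Sum.inr (Sum.inl (F.mu x c))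
  | Sum.inr (Sum.inl b), Sum.inr (Sum.inl b') => Sum.inr (Sum.inl (F.sB.op b b'))
  | Sum.inr (Sum.inl b), Sum.inr (Sum.inr c) => Sum.map id Sum.inr (F.lam b c)
  | Sum.inr (Sum.inr c), Sum.inr (Sum.inl b) => Sum.map id Sum.inr (F.lam b c)
  | Sum.inr (Sum.inr c), Sum.inr (Sum.inr c') => Sum.inr (F.kap c c')

/-- The Steiner quasigroup on `X ∪ B ∪ C` described by a frame. -/
def extend (F : Frame X B C) (sX : Squag X) : Squag (X ⊕ (B ⊕ C)) where
  op := F.extendOp sX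
  op_self p := by
    rcases p with x | b | c
    · simp [extendOp, sX.op_self]
    · simp [extendOp, F.sB.op_self]
    · simp [extendOp, F.kap_self]
  op_comm p q := by
    rcases p with x | b | c <;> rcases q with y | b' | c' <;> simp only [extendOp]
    · rw [sX.op_comm]
    · rw [F.sB.op_comm]
    · rw [F.kap_comm]
  op_op p q := by
    rcases p with x | b | c <;> rcases q with y | b' | c'
    · simp [extendOp, sX.op_op]
    · simp [extendOp]
    · simp [extendOp]
    · have := F.lam_mu y ((F.mu y).symm b)
      rw [Equiv.apply_symm_apply] at this
      simp [extendOp, this]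
    · simp [extendOp, F.sB.op_op]
    · rcases h : F.lam b c' with x | d
      · have : (F.mu x).symm b = c' := by rw [← F.mu_of_lam _ _ _ h, Equiv.symm_apply_apply]
        simp [extendOp, h, this]
      · have := F.lam_of_kap b d c' (by rw [F.kap_comm]; exact F.kap_of_lam _ _ _ h)
        simp [extendOp, h, this]
    · simp [extendOp, F.lam_mu]
    · rcases h : F.lam b' c with x | d
      · simp [extendOp, h, F.mu_of_lam _ _ _ h]
      · simp [extendOp, h, F.kap_of_lam _ _ _ h]
    · rcases h : F.kap c c' with b | d
      · simp [extendOp, h, F.lam_of_kap _ _ _ h]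
      · simp [extendOp, h, F.kap_of_kap _ _ _ h]

lemma isHom_extend_inl (F : Frame X B C) (sX : Squag X) :
    IsHom sX (F.extend sX) Sum.inl := fun _ _ => rfl

end Frame

lemma zmod_three_cases : ∀ i j : ZMod 3, j = i ∨ j = i + 1 ∨ i = j + 1 := by decide

section Bose

variable {R : Type*} [CommRing R]

lemma half_mul_add_eq {t : R} (ht : 2 * t = 1) {a b c : R} :
    t * (a + b) = c ↔ b = 2 * c - a := by
  constructor
  · rintro rfl
    linear_combination (-(a + b)) * ht
  · rintro rfl
    linear_combination c * ht

/-- The operation of Bose's construction on `ℤ/3 × R`, where `t` is one half. -/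
def boseOp (t : R) (p q : ZMod 3 × R) : ZMod 3 × R :=
  if p.1 = q.1 then if p.2 = q.2 then p else (p.1 + 1, t * (p.2 + q.2))
  else if p.2 = q.2 then (-p.1 - q.1, p.2)
  else if q.1 = p.1 + 1 then (p.1, 2 * q.2 - p.2)
  else (q.1, 2 * p.2 - q.2)

variable {t : R}

lemma zmod_three_ne_add_one (i : ZMod 3) : i ≠ i + 1 := by revert i; decide

lemma zmod_three_add_one_add_one_ne (i : ZMod 3) : i ≠ i + 1 + 1 := by revert i; decide

lemma zmod_three_neg_sub_ne {i j : ZMod 3} (h : i ≠ j) : i ≠ -i - j := by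
  revert i j; decide

lemma boseOp_same (i : ZMod 3) {a b : R} (h : a ≠ b) :
    boseOp t (i, a) (i, b) = (i + 1, t * (a + b)) := by simp [boseOp, h]

lemma boseOp_level {i j : ZMod 3} (h : i ≠ j) (a : R) :
    boseOp t (i, a) (j, a) = (-i - j, a) := by simp [boseOp, h]

lemma boseOp_up (i : ZMod 3) {a b : R} (h : a ≠ b) :
    boseOp t (i, a) (i + 1, b) = (i, 2 * b - a) := by
  simp [boseOp, h]

lemma boseOp_down (i : ZMod 3) {a b : R} (h : a ≠ b) :
    boseOp t (i + 1, a) (i, b) = (i, 2 * a - b) := by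
  have := (zmod_three_add_one_add_one_ne i)
  simp [boseOp, h, this]

/-- Bose's Steiner quasigroup on `ℤ/3 × R`, where `R` contains one half. -/
def bose (ht : 2 * t = 1) : Squag (ZMod 3 × R) where
  op := boseOp t
  op_self p := by simp [boseOp]
  op_comm := by
    rintro ⟨i, a⟩ ⟨j, b⟩
    rcases eq_or_ne a b with rfl | hab
    · rcases eq_or_ne i j with rfl | hij
      · rfl
      · rw [boseOp_level hij, boseOp_level hij.symm, neg_sub_left, neg_sub_left, add_comm]
    rcases zmod_three_cases i j with rfl | rfl | rfl
    · rw [boseOp_same _ hab, boseOp_same _ hab.symm, add_comm a]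
    · rw [boseOp_up _ hab, boseOp_down _ hab.symm]
    · rw [boseOp_up _ hab.symm, boseOp_down _ hab]
  op_op := by
    rintro ⟨i, a⟩ ⟨j, b⟩
    rcases eq_or_ne a b with rfl | hab
    · rcases eq_or_ne i j with rfl | hij
      · simp [boseOp]
      · rw [boseOp_level hij, boseOp_level (zmod_three_neg_sub_ne hij)]
        simp
    rcases zmod_three_cases i j with rfl | rfl | rfl
    · rw [boseOp_same _ hab, boseOp_up]
      · rw [Prod.mk.injEq]
        exact ⟨rfl, by linear_combination (a + b) * ht⟩
      · intro h
        have := (half_mul_add_eq ht).1 h.symm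
        exact hab (by rw [this]; ring)
    · rw [boseOp_up _ hab, boseOp_same]
      · rw [Prod.mk.injEq]
        exact ⟨rfl, by linear_combination b * ht⟩
      · intro h
        apply hab
        linear_combination t * h - (a - b) * ht
    · rw [boseOp_down _ hab, boseOp_down]
      · simp
      · intro h
        apply hab
        linear_combination - h

end Bose

section Labels

variable {R : Type*} [CommRing R]

/-- The residue `i` modulo `3` as the element `0`, `1` or `2` of `R`. -/
def lev (i : ZMod 3) : R := (i.val : R)

@[simp] lemma lev_zero : lev (R := R) 0 = 0 := by simp [lev]

@[simp] lemma lev_one : lev (R := R) 1 = 1 := by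
  have : (1 : ZMod 3).val = 1 := by decide
  simp [lev, this]

@[simp] lemma lev_two : lev (R := R) 2 = 2 := by
  have : (2 : ZMod 3).val = 2 := by decide
  simp [lev, this]

lemma zmod_three_eq (i : ZMod 3) : i = 0 ∨ i = 1 ∨ i = 2 := by revert i; decide

lemma eq_zero_of_lev_mul {t : R} (ht : 2 * t = 1) {i j : ZMod 3} (hij : i ≠ j) {r : R}
    (h : (lev i - lev j) * r = 0) : r = 0 := by
  rcases zmod_three_eq i with rfl | rfl | rfl <;> rcases zmod_three_eq j with rfl | rfl | rfl <;>
    first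
    | exact absurd rfl hij
    | (simp only [lev_zero, lev_one, lev_two] at h
       first
       | linear_combination h
       | linear_combination -h
       | linear_combination t * h - r * ht
       | linear_combination -t * h - r * ht)

/-- The points of the subsystem of the extension: three special points, and two points for
each element of `P`. -/
abbrev Lab (P : Finset R) := ZMod 3 ⊕ ({s : ZMod 3 // s ≠ 0} × P)

variable {P : Finset R} (e : R → ZMod 3)

/-- The matching of `ℤ/3 × R` with itself attached to a label. -/
def labMu : Lab P → (ZMod 3 × R) ≃ (ZMod 3 × R)
  | Sum.inl s =>
    { toFun := fun c => (c.1 + s + e c.2, c.2)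
      invFun := fun b => (b.1 - s - e b.2, b.2)
      left_inv := fun c => by ext1 <;> simp only <;> ring
      right_inv := fun b => by ext1 <;> simp only <;> ring }
  | Sum.inr (s, p) =>
    { toFun := fun c => (c.1 + s, c.2 + (lev (c.1 - s) - lev c.1) * p)
      invFun := fun b => (b.1 - s, b.2 - (lev (b.1 - s - s) - lev (b.1 - s)) * p)
      left_inv := fun c => by ext1 <;> simp
      right_inv := fun b => by ext1 <;> simp }

@[simp] lemma labMu_inl (s i : ZMod 3) (γ : R) :
    labMu (P := P) e (Sum.inl s) (i, γ) = (i + s + e γ, γ) := rfl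

@[simp] lemma labMu_inr (s : {s : ZMod 3 // s ≠ 0}) (p : P) (i : ZMod 3) (γ : R) :
    labMu e (Sum.inr (s, p)) (i, γ) = (i + s, γ + (lev (i - s) - lev i) * p) := rfl

variable {t : R} (ht : 2 * t = 1) (hP : (0 : R) ∉ P)

lemma labMu_injective (ht : 2 * t = 1) (hP : (0 : R) ∉ P) (c : ZMod 3 × R) :
    Function.Injective fun x : Lab P => labMu e x c := by
  obtain ⟨i, γ⟩ := c
  have aux : ∀ (s : {s : ZMod 3 // s ≠ 0}) (r : R), (lev (i - s) - lev i) * r = 0 → r = 0 := by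
    intro s r h
    refine eq_zero_of_lev_mul ht (fun h' => s.2 ?_) h
    simpa using h'
  rintro (s | ⟨s, p⟩) (s' | ⟨s', p'⟩) h
  · simpa using h
  · simp only [labMu_inl, labMu_inr, Prod.mk.injEq] at h
    exact absurd (aux s' p' (by linear_combination -h.2)) fun h0 => hP (h0 ▸ p'.2)
  · simp only [labMu_inl, labMu_inr, Prod.mk.injEq] at h
    exact absurd (aux s p (by linear_combination h.2)) fun h0 => hP (h0 ▸ p.2)
  · simp only [labMu_inr, Prod.mk.injEq, add_right_inj] at h
    obtain ⟨h1, h2⟩ := h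
    obtain rfl := Subtype.ext h1
    have := aux s (p - p') (by linear_combination h2)
    rw [sub_eq_zero] at this
    rw [Subtype.ext this]

/-- Two points of `ℤ/3 × R` on a common transversal `{(i, a + 2 * i * p)}`, `p ∈ P ∪ {0}`. -/
def Joined (P : Finset R) (c d : ZMod 3 × R) (p : R) : Prop :=
  p ∈ insert 0 P ∧ d.2 = c.2 + 2 * (lev d.1 - lev c.1) * p

lemma Joined.symm {c d : ZMod 3 × R} {p : R} (h : Joined P c d p) : Joined P d c p :=
  ⟨h.1, by linear_combination -h.2⟩

lemma Joined.fst_ne {c d : ZMod 3 × R} {p : R} (h : Joined P c d p) (hcd : c ≠ d) :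
    c.1 ≠ d.1 := by
  intro h1
  apply hcd
  ext1
  · exact h1
  · have := h.2
    rw [h1] at this
    simpa using this.symm

lemma Joined.unique (ht : 2 * t = 1) {c d : ZMod 3 × R} {p q : R} (h : Joined P c d p)
    (h' : Joined P c d q) (hcd : c ≠ d) : p = q := by
  have : p - q = 0 := eq_zero_of_lev_mul ht (h.fst_ne hcd).symm (by
    linear_combination t * (h'.2 - h.2) - (lev d.1 - lev c.1) * (p - q) * ht)
  exact sub_eq_zero.1 this

/-- The point of `ℤ/3 × R` on the triple through two points that are not joined. -/
def midPt (t : R) (c d : ZMod 3 × R) : ZMod 3 × R := (-c.1 - d.1, t * (c.2 + d.2))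

lemma midPt_comm (c d : ZMod 3 × R) : midPt t c d = midPt t d c := by
  ext1 <;> simp only [midPt] <;> ring

lemma exists_labMu_eq_midPt (ht : 2 * t = 1) {c d : ZMod 3 × R} (hcd : c ≠ d) :
    (∃ x : Lab P, labMu e x c = midPt t c d) ↔ ∃ p, Joined P c d p := by
  obtain ⟨i, γ⟩ := c
  obtain ⟨j, δ⟩ := d
  have h3 : (3 : ZMod 3) = 0 := by decide
  constructor
  · rintro ⟨s | ⟨s, p⟩, h⟩
    · simp only [labMu_inl, midPt, Prod.mk.injEq] at h
      refine ⟨0, by simp, ?_⟩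
      have := (half_mul_add_eq ht).1 h.2.symm
      simp only [this]
      ring
    · simp only [labMu_inr, midPt, Prod.mk.injEq] at h
      refine ⟨p, by simp, ?_⟩
      have h1 : i - s = j := by linear_combination -h.1 + i * h3
      have := (half_mul_add_eq ht).1 h.2.symm
      rw [h1] at this
      simp only [this]
      ring
  · rintro ⟨p, hp⟩
    rcases Finset.mem_insert.1 hp.1 with rfl | hpP
    · refine ⟨Sum.inl (i - j - e γ), ?_⟩
      have h2 := hp.2
      simp only [mul_zero, add_zero] at h2
      subst h2
      simp only [labMu_inl, midPt, Prod.mk.injEq]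
      exact ⟨by linear_combination i * h3, by linear_combination -δ * ht⟩
    · have hij := hp.fst_ne hcd
      refine ⟨Sum.inr (⟨i - j, sub_ne_zero.2 hij⟩, ⟨p, hpP⟩), ?_⟩
      have h2 := hp.2
      simp only at h2
      simp only [labMu_inr, midPt, Prod.mk.injEq, sub_sub_cancel]
      exact ⟨by linear_combination i * h3,
        by linear_combination -t * h2 - (γ + (lev j - lev i) * p) * ht⟩

/-- The operation between the two copies of `ℤ/3 × R`. -/
def labLam (P : Finset R) (b c : ZMod 3 × R) : Lab P ⊕ (ZMod 3 × R) :=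
  if h : ∃ x : Lab P, labMu e x c = b then Sum.inl h.choose
  else Sum.inr (-b.1 - c.1, 2 * b.2 - c.2)

/-- The operation inside the second copy of `ℤ/3 × R`. -/
def labKap (t : R) (P : Finset R) (c d : ZMod 3 × R) : (ZMod 3 × R) ⊕ (ZMod 3 × R) :=
  if c = d then Sum.inr c
  else if h : ∃ p, Joined P c d p then
    Sum.inr (-c.1 - d.1, c.2 + 2 * (lev (-c.1 - d.1) - lev c.1) * h.choose)
  else Sum.inl (midPt t c d)

lemma labKap_of_joined (ht : 2 * t = 1) {c d : ZMod 3 × R} (hcd : c ≠ d) {p : R}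
    (h : Joined P c d p) :
    labKap t P c d = Sum.inr (-c.1 - d.1, c.2 + 2 * (lev (-c.1 - d.1) - lev c.1) * p) := by
  have hex : ∃ p, Joined P c d p := ⟨p, h⟩
  rw [labKap, if_neg hcd, dif_pos hex, hex.choose_spec.unique ht h hcd]

lemma labKap_of_not_joined {c d : ZMod 3 × R} (hcd : c ≠ d) (h : ¬ ∃ p, Joined P c d p) :
    labKap t P c d = Sum.inl (midPt t c d) := by
  rw [labKap, if_neg hcd, dif_neg h]

lemma labKap_eq_inl {b c d : ZMod 3 × R} (h : labKap t P c d = Sum.inl b) :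
    c ≠ d ∧ (¬ ∃ p, Joined P c d p) ∧ b = midPt t c d := by
  rw [labKap] at h
  split_ifs at h with h1 h2
  exact ⟨h1, h2, (Sum.inl.inj h).symm⟩

/-- The frame on two copies of `ℤ/3 × R` attached to a set `P` of nonzero elements of `R` and
a twist `e`. -/
def labFrame : Frame (Lab P) (ZMod 3 × R) (ZMod 3 × R) where
  sB := bose ht
  mu := labMu e
  lam := labLam e P
  kap := labKap t P
  kap_self c := by simp [labKap]
  kap_comm c d := by
    rcases eq_or_ne c d with rfl | hcd
    · rfl
    by_cases h : ∃ p, Joined P c d p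
    · obtain ⟨p, hp⟩ := h
      rw [labKap_of_joined ht hcd hp, labKap_of_joined ht hcd.symm hp.symm]
      have : -c.1 - d.1 = -d.1 - c.1 := by ring
      rw [this, hp.2]
      congr 2
      ring
    · have h' : ¬ ∃ p, Joined P d c p := fun ⟨p, hp⟩ => h ⟨p, hp.symm⟩
      rw [labKap_of_not_joined hcd h, labKap_of_not_joined hcd.symm h', midPt_comm]
  lam_mu x c := by
    have h : ∃ y : Lab P, labMu e y c = labMu e x c := ⟨x, rfl⟩
    rw [labLam, dif_pos h, labMu_injective e ht hP c h.choose_spec]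
  mu_of_lam b c x h := by
    rw [labLam] at h
    split_ifs at h with h1
    rw [← Sum.inl.inj h]
    exact h1.choose_spec
  kap_of_lam b c d h := by
    rw [labLam] at h
    split_ifs at h with h1
    have hd := Sum.inr.inj h
    have hb : midPt t c d = b := by
      rw [← hd]
      ext1
      · simp only [midPt]
        ring
      · simp only [midPt]
        linear_combination b.2 * ht
    have hcd : c ≠ d := by
      rintro rfl
      apply h1
      obtain ⟨i, γ⟩ := c
      refine ⟨Sum.inl (-e γ), ?_⟩
      rw [← hb]
      ext1
      · have h3 : (3 : ZMod 3) = 0 := by decide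
        simp only [labMu_inl, midPt]
        linear_combination i * h3
      · simp only [labMu_inl, midPt]
        linear_combination -γ * ht
    rw [← hb] at h1
    rw [labKap_of_not_joined hcd (mt (exists_labMu_eq_midPt e ht hcd).2 h1), hb]
  lam_of_kap b c d h := by
    obtain ⟨hcd, h1, rfl⟩ := labKap_eq_inl h
    rw [labLam, dif_neg (mt (exists_labMu_eq_midPt e ht hcd).1 h1)]
    congr 1
    ext1
    · simp [midPt]
    · simp only [midPt]
      linear_combination (c.2 + d.2) * ht
  kap_of_kap c d d' h := by
    rcases eq_or_ne c d with rfl | hcd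
    · simp only [labKap, if_true, Sum.inr.injEq] at h
      subst h
      simp [labKap]
    by_cases hj : ∃ p, Joined P c d p
    · obtain ⟨p, hp⟩ := hj
      rw [labKap_of_joined ht hcd hp] at h
      have hd' := Sum.inr.inj h
      have hj' : Joined P c d' p := ⟨hp.1, by rw [← hd']⟩
      have hne : c ≠ d' := by
        intro h'
        exact zmod_three_neg_sub_ne (hp.fst_ne hcd) (by rw [← hd'] at h'; exact congrArg Prod.fst h')
      rw [labKap_of_joined ht hne hj']
      have : -c.1 - d'.1 = d.1 := by rw [← hd']; simp
      rw [this, ← hp.2]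
    · rw [labKap_of_not_joined hcd hj] at h
      exact absurd h (by simp)

end Labels

section Contains

variable {α β γ : Type*}

/-- Some Steiner triple system on `x` points has a subsystem isomorphic to `W`. -/
def Contains (W : Squag γ) (x : ℕ) : Prop :=
  ∃ (s : Squag (Fin x)) (f : γ → Fin x), Function.Injective f ∧ IsHom W s f

lemma contains_of_isHom [Fintype β] {W : Squag γ} {s : Squag β} {f : γ → β}
    (hf : Function.Injective f) (hs : IsHom W s f) {x : ℕ} (hx : Fintype.card β = x) :
    Contains W x := by
  let e : β ≃ Fin x := Fintype.equivFinOfCardEq hx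
  exact ⟨s.map e, e ∘ f, e.injective.comp hf, (s.isHom_map e).comp hs⟩

lemma Contains.trans {W : Squag γ} {x y : ℕ} (h : Contains W x)
    (h' : ∀ s : Squag (Fin x), Contains s y) : Contains W y := by
  obtain ⟨s, f, hf, hs⟩ := h
  obtain ⟨s', f', hf', hs'⟩ := h' s
  exact ⟨s', f' ∘ f, hf'.comp hf, hs'.comp hs⟩

/-- The Steiner triple system with a single triple. -/
def triangle : Squag (ZMod 3) where
  op a b := -a - b
  op_self := by decide
  op_comm := by decide
  op_op := by decide

/-- The Steiner triple system with a single point. -/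
def point : Squag Unit where
  op _ _ := ()
  op_self _ := rfl
  op_comm _ _ := rfl
  op_op _ _ := rfl

lemma exists_squag_of_card_three [Fintype β] (h : Fintype.card β = 3) :
    Nonempty (Squag β) :=
  ⟨triangle.map (Fintype.equivOfCardEq (by rw [ZMod.card, h]))⟩

lemma contains_double {x : ℕ} (hx : 0 < x) (s : Squag (Fin x)) : Contains s (2 * x + 1) := by
  have : Nonempty (Fin x) := ⟨⟨0, hx⟩⟩
  obtain ⟨Y⟩ := exists_squag_of_card_three (β := Unit ⊕ ZMod 2) (by simp [ZMod.card])
  have hY : IsHom point Y Sum.inl := by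
    rintro ⟨⟩ ⟨⟩
    rw [Y.op_self]
  refine contains_of_isHom (s := moore s hY) (f := fun v => Sum.inr (v, 0)) ?_
    (isHom_moore_zero s hY) (by simp [ZMod.card]; ring)
  intro v w h
  simpa using h

lemma contains_triple {x : ℕ} (hx : 0 < x) (s : Squag (Fin x)) : Contains s (3 * x) := by
  have : Nonempty (Fin x) := ⟨⟨0, hx⟩⟩
  obtain ⟨Y⟩ := exists_squag_of_card_three (β := Empty ⊕ ZMod 3) (by simp [ZMod.card])
  let sX : Squag Empty := ⟨Empty.elim, nofun, nofun, nofun⟩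
  have hY : IsHom sX Y Sum.inl := nofun
  refine contains_of_isHom (s := moore s hY) (f := fun v => Sum.inr (v, 0)) ?_
    (isHom_moore_zero s hY) (by simp [ZMod.card]; ring)
  intro v w h
  simpa using h

lemma card_lab {R : Type*} [CommRing R] (P : Finset R) : Fintype.card (Lab P) = 3 + 2 * #P := by
  have : Fintype.card {s : ZMod 3 // s ≠ 0} = 2 := by
    rw [Fintype.card_subtype_compl, Fintype.card_subtype_eq, ZMod.card]
  rw [Fintype.card_sum, Fintype.card_prod, this, ZMod.card, Fintype.card_coe]

lemma exists_half {m : ℕ} (hm : Odd m) : ∃ t : ZMod m, 2 * t = 1 := by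
  obtain ⟨k, rfl⟩ := hm
  refine ⟨(k + 1 : ℕ), ?_⟩
  have h := ZMod.natCast_self (2 * k + 1)
  push_cast at h ⊢
  linear_combination h

lemma contains_extension {b m : ℕ} (hb : Odd b) (hb3 : 3 ≤ b) (hm : Odd m) (hbm : b ≤ 2 * m + 1)
    (s : Squag (Fin b)) : Contains s (b + 6 * m) := by
  have : NeZero m := ⟨hm.pos.ne'⟩
  obtain ⟨t, ht⟩ := exists_half hm
  obtain ⟨k, hk⟩ := hb
  obtain ⟨P, hPsub, hPcard⟩ := Finset.exists_subset_card_eq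
    (s := (Finset.univ : Finset (ZMod m)).erase 0) (n := k - 1) (by
      rw [Finset.card_erase_of_mem (Finset.mem_univ _), Finset.card_univ, ZMod.card]
      omega)
  have hP : (0 : ZMod m) ∉ P := fun h => by simpa using hPsub h
  have hcard : Fintype.card (Fin b) = Fintype.card (Lab P) := by
    rw [card_lab, hPcard, Fintype.card_fin]
    omega
  let e := Fintype.equivOfCardEq hcard
  refine contains_of_isHom (s := (labFrame (P := P) (fun _ => 0) ht hP).extend (s.map e))
    (f := Sum.inl ∘ e) (Sum.inl_injective.comp e.injective)
    (((labFrame (P := P) (fun _ => 0) ht hP).isHom_extend_inl _).comp (s.isHom_map e)) ?_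
  rw [Fintype.card_sum, ← hcard, Fintype.card_sum, Fintype.card_prod, ZMod.card, ZMod.card,
    Fintype.card_fin]
  ring

lemma Contains.add_six_mul {W : Squag γ} {b k : ℕ} (h : Contains W b) (hb : Odd b) (hb3 : 3 ≤ b)
    (hk : 5 * b ≤ k) : Contains W (b + 6 * k) := by
  rcases Nat.even_or_odd k with hk' | hk'
  · have h1 : Contains W (b + 6 * b) :=
      h.trans fun s => contains_extension hb hb3 hb (by omega) s
    have h2 := h1.trans fun s => contains_extension (m := k - b)
      (by obtain ⟨c, rfl⟩ := hb; exact ⟨7 * c + 3, by ring⟩) (by omega)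
      (Nat.Even.sub_odd (by omega) hk' hb) (by omega) s
    convert h2 using 1
    omega
  · exact h.trans fun s => contains_extension hb hb3 hk' (by omega) s

/-- A Steiner triple system is a subsystem of one of every large enough admissible size. -/
lemma exists_forall_contains [Fintype γ] (W : Squag γ) :
    ∃ N, ∀ x, N ≤ x → x % 6 = 1 ∨ x % 6 = 3 → Contains W x := by
  suffices H : ∃ w, 0 < w ∧ Contains W w by
    obtain ⟨w, hw, h⟩ := H
    have h1 := h.trans (contains_double hw)
    have h2 := h1.trans (contains_triple (by omega))
    have h3 := h2.trans (contains_double (by omega))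
    refine ⟨31 * (2 * (3 * (2 * w + 1)) + 1), fun x hx hx6 => ?_⟩
    rcases hx6 with hx6 | hx6
    · convert h3.add_six_mul (k := (x - (2 * (3 * (2 * w + 1)) + 1)) / 6) ⟨_, rfl⟩ (by omega)
        (by omega) using 1
      omega
    · convert h2.add_six_mul (k := (x - 3 * (2 * w + 1)) / 6) ⟨3 * w + 1, by ring⟩ (by omega)
        (by omega) using 1
      omega
  rcases isEmpty_or_nonempty γ with hγ | hγ
  · let s : Squag (Fin 1) := point.map (Fintype.equivOfCardEq rfl)
    exact ⟨1, one_pos, s, isEmptyElim, fun a => isEmptyElim a, fun a => isEmptyElim a⟩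
  · exact ⟨Fintype.card γ, Fintype.card_pos, contains_of_isHom (f := id) (s := W)
      Function.injective_id (fun _ _ => rfl) rfl⟩

end Contains

lemma card_dvd_of_closed {A : Type*} [AddCommGroup A] [Fintype A] {S : Finset A}
    (hne : S.Nonempty) (hS : ∀ a ∈ S, ∀ b ∈ S, ∀ c ∈ S, b + (a - c) ∈ S) :
    #S ∣ Fintype.card A := by
  obtain ⟨s, hs⟩ := hne
  let H : AddSubgroup A :=
    { carrier := {r | s + r ∈ S}
      zero_mem' := by simpa using hs
      add_mem' := by
        intro a b ha hb
        have := hS _ ha _ hb s hs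
        simp only [Set.mem_ofPred_eq] at this ⊢
        convert this using 1
        abel
      neg_mem' := by
        intro a ha
        have := hS _ hs _ hs _ ha
        simp only [Set.mem_ofPred_eq] at this ⊢
        convert this using 1
        abel }
  have hcard : Nat.card H = #S := by
    rw [← Fintype.card_coe, ← Nat.card_eq_fintype_card]
    refine Nat.card_congr ⟨fun r => ⟨s + r, r.2⟩, fun a => ⟨a - s, ?_⟩, ?_, ?_⟩
    · change s + (a - s) ∈ S
      rw [add_sub_cancel]
      exact a.2
    · intro r
      simp
    · intro a
      simp
  rw [← hcard, ← Nat.card_eq_fintype_card]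
  exact H.card_addSubgroup_dvd_card

section Fibres

variable {R : Type*} [Fintype R]

/-- The fibre over `i` of a set of points of `ℤ/3 × R`. -/
def fibre (T : Finset (ZMod 3 × R)) (i : ZMod 3) : Finset R :=
  Finset.univ.filter fun a => (i, a) ∈ T

@[simp] lemma mem_fibre {T : Finset (ZMod 3 × R)} {i : ZMod 3} {a : R} :
    a ∈ fibre T i ↔ (i, a) ∈ T := by simp [fibre]

variable [CommRing R] {t : R} {ht : 2 * t = 1} {T : Finset (ZMod 3 × R)}

lemma half_mem_fibre (hT : (bose ht).IsClosed T) {i : ZMod 3} {a b : R} (ha : a ∈ fibre T i)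
    (hb : b ∈ fibre T i) (hab : a ≠ b) : t * (a + b) ∈ fibre T (i + 1) := by
  rw [mem_fibre] at *
  have := hT _ ha _ hb
  rwa [show (bose ht).op (i, a) (i, b) = _ from boseOp_same i hab] at this

lemma reflect_mem_fibre (hT : (bose ht).IsClosed T) {i : ZMod 3} {a b : R} (ha : a ∈ fibre T i)
    (hb : b ∈ fibre T (i + 1)) (hab : a ≠ b) : 2 * b - a ∈ fibre T i := by
  rw [mem_fibre] at *
  have := hT _ ha _ hb
  rwa [show (bose ht).op (i, a) (i + 1, b) = _ from boseOp_up i hab] at this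

lemma level_mem_fibre (hT : (bose ht).IsClosed T) {i j : ZMod 3} {a : R} (ha : a ∈ fibre T i)
    (hb : a ∈ fibre T j) (hij : i ≠ j) : a ∈ fibre T (-i - j) := by
  rw [mem_fibre] at *
  have := hT _ ha _ hb
  rwa [show (bose ht).op (i, a) (j, a) = _ from boseOp_level hij a] at this

lemma card_erase_fibre (hT : (bose ht).IsClosed T) {i : ZMod 3} {a : R} (ha : a ∈ fibre T i) :
    #((fibre T i).erase a) = #((fibre T (i + 1)).erase a) := by
  refine Finset.card_nbij' (fun b => t * (a + b)) (fun c => 2 * c - a) ?_ ?_ ?_ ?_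
  · intro b hb
    obtain ⟨hba, hb⟩ := Finset.mem_erase.1 hb
    refine Finset.mem_coe.2 (Finset.mem_erase.2 ⟨fun h => hba ?_, half_mem_fibre hT ha hb hba.symm⟩)
    rw [(half_mul_add_eq ht).1 h]
    ring
  · intro c hc
    obtain ⟨hca, hc⟩ := Finset.mem_erase.1 hc
    refine Finset.mem_coe.2 (Finset.mem_erase.2 ⟨fun h => hca ?_, reflect_mem_fibre hT ha hc hca.symm⟩)
    linear_combination t * h - (c - a) * ht
  · intro b _
    simp only
    linear_combination (a + b) * ht
  · intro c _
    simp only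
    linear_combination c * ht

lemma card_fibre_of_mem (hT : (bose ht).IsClosed T) {i : ZMod 3} {a : R} (ha : a ∈ fibre T i)
    (ha' : a ∈ fibre T (i + 1)) : #(fibre T i) = #(fibre T (i + 1)) := by
  have := card_erase_fibre hT ha
  rw [Finset.card_erase_of_mem ha, Finset.card_erase_of_mem ha'] at this
  have h1 := Finset.card_pos.2 ⟨a, ha⟩
  have h2 := Finset.card_pos.2 ⟨a, ha'⟩
  omega

lemma card_fibre_of_notMem (hT : (bose ht).IsClosed T) {i : ZMod 3} {a : R} (ha : a ∈ fibre T i)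
    (ha' : a ∉ fibre T (i + 1)) : #(fibre T i) = #(fibre T (i + 1)) + 1 := by
  have := card_erase_fibre hT ha
  rw [Finset.card_erase_of_mem ha, Finset.erase_eq_of_notMem ha'] at this
  have h1 := Finset.card_pos.2 ⟨a, ha⟩
  omega

lemma card_fibre_le_two_or_eq (hT : (bose ht).IsClosed T) :
    (∀ i, #(fibre T i) ≤ 2) ∨ ∀ i, fibre T i = fibre T 0 := by
  by_cases H : ∀ i, fibre T i ⊆ fibre T (i + 1)
  · right
    have h0 := H 0
    have h1 := H 1
    have h2 := H 2
    rw [show (0 + 1 : ZMod 3) = 1 from rfl] at h0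
    rw [show (1 + 1 : ZMod 3) = 2 from rfl] at h1
    rw [show (2 + 1 : ZMod 3) = 0 from rfl] at h2
    intro i
    rcases zmod_three_eq i with rfl | rfl | rfl
    · rfl
    · exact (h1.trans h2).antisymm h0
    · exact h2.antisymm (h0.trans h1)
  · left
    push Not at H
    obtain ⟨i, hi⟩ := H
    obtain ⟨a, ha, ha'⟩ := Finset.not_subset.1 hi
    have hcard := card_fibre_of_notMem hT ha ha'
    have hdis : ∀ b ∈ fibre T i, b ∉ fibre T (i + 1) := by
      intro b hb hb'
      have := card_fibre_of_mem hT hb hb'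
      omega
    have h3 : i + 1 + 1 + 1 = i := (by decide : ∀ i : ZMod 3, i + 1 + 1 + 1 = i) i
    have h4 : -(i + 1) - (i + 1 + 1) = i :=
      (by decide : ∀ i : ZMod 3, -(i + 1) - (i + 1 + 1) = i) i
    have key : #(fibre T i) ≤ 2 ∧ #(fibre T (i + 1)) ≤ 2 ∧ #(fibre T (i + 1 + 1)) ≤ 2 := by
      have hlast : ∀ d ∈ fibre T (i + 1 + 1), #(fibre T (i + 1 + 1)) = #(fibre T i) ∨
          #(fibre T (i + 1 + 1)) = #(fibre T i) + 1 := by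
        intro d hd
        by_cases hd' : d ∈ fibre T (i + 1 + 1 + 1)
        · have := card_fibre_of_mem hT hd hd'
          rw [h3] at this
          exact Or.inl this
        · have := card_fibre_of_notMem hT hd hd'
          rw [h3] at this
          exact Or.inr this
      rcases (fibre T (i + 1 + 1)).eq_empty_or_nonempty with he | ⟨d, hd⟩
      · rw [he, Finset.card_empty]
        rcases (fibre T (i + 1)).eq_empty_or_nonempty with he' | ⟨c, hc⟩
        · rw [he', Finset.card_empty] at hcard ⊢
          omega
        · have := card_fibre_of_notMem hT hc (by simp [he])
          rw [he, Finset.card_empty] at this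
          omega
      · have hd3 := hlast d hd
        rcases (fibre T (i + 1)).eq_empty_or_nonempty with he' | ⟨c, hc⟩
        · rw [he', Finset.card_empty] at hcard ⊢
          omega
        · by_cases hc' : c ∈ fibre T (i + 1 + 1)
          · have hne := zmod_three_ne_add_one (i + 1)
            have := level_mem_fibre hT hc hc' hne
            rw [h4] at this
            exact absurd hc (hdis c this)
          · have := card_fibre_of_notMem hT hc hc'
            omega
    intro j
    have : j = i ∨ j = i + 1 ∨ j = i + 1 + 1 :=
      (by decide : ∀ i j : ZMod 3, j = i ∨ j = i + 1 ∨ j = i + 1 + 1) i j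
    rcases this with rfl | rfl | rfl
    exacts [key.1, key.2.1, key.2.2]

lemma card_fibre_dvd (hT : (bose ht).IsClosed T) (hne : (fibre T 0).Nonempty)
    (heq : ∀ i, fibre T i = fibre T 0) : #(fibre T 0) ∣ Fintype.card R := by
  refine card_dvd_of_closed hne ?_
  have half : ∀ a ∈ fibre T 0, ∀ b ∈ fibre T 0, t * (a + b) ∈ fibre T 0 := by
    intro a ha b hb
    rcases eq_or_ne a b with rfl | hab
    · rwa [show t * (a + a) = a by linear_combination a * ht]
    · rw [← heq (0 + 1)]
      exact half_mem_fibre hT ha hb hab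
  have reflect : ∀ a ∈ fibre T 0, ∀ b ∈ fibre T 0, 2 * b - a ∈ fibre T 0 := by
    intro a ha b hb
    rcases eq_or_ne a b with rfl | hab
    · rwa [show 2 * a - a = a by ring]
    · exact reflect_mem_fibre hT ha (by rwa [heq]) hab
  intro a ha b hb c hc
  have := reflect c hc _ (half a ha b hb)
  rwa [show 2 * (t * (a + b)) - c = b + (a - c) by linear_combination (a + b) * ht] at this

end Fibres

section Extension

/-- The points of `S` outside `X`. -/
def outer {X A : Type*} [Fintype A] (S : Finset (X ⊕ A)) : Finset A :=
  Finset.univ.filter fun a => Sum.inr a ∈ S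

@[simp] lemma mem_outer {X A : Type*} [Fintype A] {S : Finset (X ⊕ A)} {a : A} :
    a ∈ outer S ↔ Sum.inr a ∈ S := by simp [outer]

/-- The points of `S` in the first summand. -/
def inner {B C : Type*} [Fintype B] (S : Finset (B ⊕ C)) : Finset B :=
  Finset.univ.filter fun b => Sum.inl b ∈ S

@[simp] lemma mem_inner {B C : Type*} [Fintype B] {S : Finset (B ⊕ C)} {b : B} :
    b ∈ inner S ↔ Sum.inl b ∈ S := by simp [inner]

lemma card_eq_sum_fibre {R : Type*} [Fintype R] (T : Finset (ZMod 3 × R)) : #T = ∑ i, #(fibre T i) := by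
  have : T = Finset.univ.filter fun q => q ∈ T := by simp
  rw [this, Finset.card_filter, Fintype.sum_prod_type]
  refine Finset.sum_congr rfl fun i _ => ?_
  rw [← Finset.card_filter]
  congr 1
  ext a
  simp

lemma card_eq_sum_type {B C : Type*} [Fintype B] [Fintype C] (S : Finset (B ⊕ C)) :
    #S = #(inner S) + #(outer S) := by
  have : S = Finset.univ.filter fun q => q ∈ S := by simp
  rw [this, Finset.card_filter, Fintype.sum_sum_type, ← Finset.card_filter, ← Finset.card_filter]
  simp [outer, inner]

variable {R : Type*} [CommRing R] {t : R} {P : Finset R}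
  (e : R → ZMod 3) (ht : 2 * t = 1) (hP : (0 : R) ∉ P) (sX : Squag (Lab P))

/-- The Steiner quasigroup on the labels and two copies of `ℤ/3 × R`. -/
def labExt : Squag (Lab P ⊕ ((ZMod 3 × R) ⊕ (ZMod 3 × R))) := (labFrame e ht hP).extend sX

lemma isHom_labExt_inl : IsHom sX (labExt e ht hP sX) Sum.inl :=
  (labFrame e ht hP).isHom_extend_inl sX

/-- A subsystem of the extension contains the whole first copy of `ℤ/3 × R`, or is small
outside of the labels. -/
lemma card_outer_le [Fintype R] {S : Finset (Lab P ⊕ ((ZMod 3 × R) ⊕ (ZMod 3 × R)))}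
    (hS : (labExt e ht hP sX).IsClosed S) :
    (∀ b, Sum.inr (Sum.inl b) ∈ S) ∨ #(outer S) ≤ 15 ∨
      ∃ k, k ∣ Fintype.card R ∧ k < Fintype.card R ∧ #(outer S) ≤ 6 * k + 3 := by
  set TB : Finset (ZMod 3 × R) := inner (outer S) with hTB
  set TC : Finset (ZMod 3 × R) := outer (outer S) with hTC
  have hcard : #(outer S) = ∑ i, #(fibre TB i) + ∑ i, #(fibre TC i) := by
    rw [card_eq_sum_type, ← card_eq_sum_fibre, ← card_eq_sum_fibre]
  have hB : (bose ht).IsClosed TB := by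
    intro a ha b hb
    simp only [hTB, mem_inner, mem_outer] at *
    exact hS _ ha _ hb
  have hC : ∀ i, #(fibre TC i) ≤ #(fibre TB i) + 1 := by
    intro i
    rcases (fibre TC i).eq_empty_or_nonempty with he | ⟨γ, hγ⟩
    · simp [he]
    have : #((fibre TC i).erase γ) ≤ #(fibre TB i) := by
      refine Finset.card_le_card_of_injOn (fun δ => t * (γ + δ)) ?_ ?_
      · intro δ hδ
        obtain ⟨hne, hδ⟩ := Finset.mem_erase.1 hδ
        simp only [hTB, hTC, mem_inner, mem_outer, mem_fibre,
          Finset.mem_coe] at *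
        have h := hS _ hγ _ hδ
        have hcd : ((i, γ) : ZMod 3 × R) ≠ (i, δ) := fun h => hne (Prod.ext_iff.1 h).2.symm
        have hk := labKap_of_not_joined (t := t) (P := P) hcd
          (fun ⟨p, hp⟩ => hp.fst_ne hcd rfl)
        have hop : (labExt e ht hP sX).op (Sum.inr (Sum.inr (i, γ))) (Sum.inr (Sum.inr (i, δ))) =
          Sum.inr (labKap t P (i, γ) (i, δ)) := rfl
        rw [hop, hk, midPt] at h
        rwa [(by decide : ∀ i : ZMod 3, -i - i = i) i] at h
      · intro δ _ δ' _ h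
        simp only at h
        linear_combination 2 * h - (δ - δ') * ht
    rw [Finset.card_erase_of_mem hγ] at this
    omega
  have hC' : ∑ i, #(fibre TC i) ≤ ∑ i, #(fibre TB i) + 3 := by
    calc ∑ i, #(fibre TC i) ≤ ∑ i, (#(fibre TB i) + 1) := Finset.sum_le_sum fun i _ => hC i
      _ = _ := by simp [Finset.sum_add_distrib, ZMod.card]
  rcases card_fibre_le_two_or_eq hB with h | h
  · right; left
    have : ∑ i, #(fibre TB i) ≤ 6 := by
      calc ∑ i, #(fibre TB i) ≤ ∑ i : ZMod 3, 2 := Finset.sum_le_sum fun i _ => h i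
        _ = _ := by simp [ZMod.card]
    omega
  · have hsum : ∑ i, #(fibre TB i) = 3 * #(fibre TB 0) := by
      simp [h, ZMod.card]
    rcases (fibre TB 0).eq_empty_or_nonempty with he | hne
    · rw [he, Finset.card_empty] at hsum
      right; left
      omega
    rcases (Finset.card_le_univ (fibre TB 0)).lt_or_eq with hlt | heq
    · right; right
      exact ⟨_, card_fibre_dvd hB hne h, hlt, by omega⟩
    · left
      rintro ⟨i, b⟩
      have hu := (Finset.card_eq_iff_eq_univ _).1 heq
      have : b ∈ fibre TB i := by rw [h, hu]; exact Finset.mem_univ _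
      simpa [hTB] using this

end Extension

section MooreClosed

variable {α X A D : Type*}

lemma exists_op_inl_inr {sX : Squag X} {s : Squag (X ⊕ D)} (hs : IsHom sX s Sum.inl) (x : X)
    (q : D) : ∃ q', s.op (Sum.inl x) (Sum.inr q) = Sum.inr q' := by
  rcases h : s.op (Sum.inl x) (Sum.inr q) with y | q'
  · have := s.op_op (Sum.inl x) (Sum.inr q)
    rw [h, ← hs] at this
    exact absurd this (by simp)
  · exact ⟨q', rfl⟩

lemma card_inner_le_card_outer [Fintype X] [Fintype D] {sX : Squag X} {s : Squag (X ⊕ D)}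
    (hs : IsHom sX s Sum.inl) {S : Finset (X ⊕ D)} (hS : s.IsClosed S) {q : D}
    (hq : Sum.inr q ∈ S) : #(inner S) ≤ #(outer S) := by
  choose f hf using fun x => exists_op_inl_inr hs x q
  refine Finset.card_le_card_of_injOn f ?_ ?_
  · intro x hx
    rw [Finset.mem_coe, mem_inner] at hx
    rw [Finset.mem_coe, mem_outer, ← hf]
    exact hS _ hx _ hq
  · intro x _ y _ hxy
    have : s.op (Sum.inr q) (Sum.inl x) = s.op (Sum.inr q) (Sum.inl y) := by
      rw [s.op_comm, hf, s.op_comm, hf, hxy]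
    exact Sum.inl_injective (s.op_left_injective _ this)

variable [Fintype A]

/-- The points of `S` in the copy of `A` over `v`. -/
def slice (S : Finset (X ⊕ α × A)) (v : α) : Finset A :=
  Finset.univ.filter fun a => Sum.inr (v, a) ∈ S

variable {S : Finset (X ⊕ α × A)} {v w : α}

lemma mem_slice {a : A} : a ∈ slice S v ↔ Sum.inr (v, a) ∈ S := by simp [slice]

lemma card_outer_eq_sum_slice [Fintype α] : #(outer S) = ∑ v, #(slice S v) := by
  rw [outer, Finset.card_filter, Fintype.sum_prod_type]
  refine Finset.sum_congr rfl fun i _ => ?_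
  rw [slice, Finset.card_filter]
  exact Finset.sum_congr rfl fun _ _ => by congr

variable [AddCommGroup A] [Nonempty α] {V : Squag α} {sX : Squag X} {Y : Squag (X ⊕ A)}
  {hY : IsHom sX Y Sum.inl}

lemma neg_sub_mem_slice (hS : (moore V hY).IsClosed S) (hvw : v ≠ w) {a b : A}
    (ha : a ∈ slice S v) (hb : b ∈ slice S w) : -a - b ∈ slice S (V.op v w) := by
  rw [mem_slice] at *
  have := hS _ ha _ hb
  rwa [moore_of_ne V hY hvw] at this

lemma card_slice_op (hS : (moore V hY).IsClosed S) (hvw : v ≠ w) (hv : (slice S v).Nonempty) :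
    #(slice S (V.op v w)) = #(slice S w) := by
  obtain ⟨a, ha⟩ := hv
  have hinj : ∀ s : Set A, Set.InjOn (fun b => -a - b) s := fun s b _ c _ h => by simpa using h
  refine le_antisymm ?_ ?_
  · refine Finset.card_le_card_of_injOn (fun b => -a - b) ?_ (hinj _)
    intro b hb
    have := neg_sub_mem_slice hS (V.op_ne_left hvw).symm ha hb
    rwa [V.op_op] at this
  · exact Finset.card_le_card_of_injOn (fun b => -a - b)
      (fun b hb => neg_sub_mem_slice hS hvw ha hb) (hinj _)

lemma card_slice_eq (hS : (moore V hY).IsClosed S) (hv : (slice S v).Nonempty)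
    (hw : (slice S w).Nonempty) : #(slice S v) = #(slice S w) := by
  rcases eq_or_ne v w with rfl | hvw
  · rfl
  · rw [← card_slice_op hS hvw hv, V.op_comm, card_slice_op hS hvw.symm hw]

lemma card_slice_dvd (hS : (moore V hY).IsClosed S) (hvw : v ≠ w) (hv : (slice S v).Nonempty)
    (hw : (slice S w).Nonempty) : #(slice S v) ∣ Fintype.card A := by
  refine card_dvd_of_closed hv ?_
  obtain ⟨d, hd⟩ := hw
  intro a ha b hb c hc
  have h1 := neg_sub_mem_slice hS hvw ha hd
  have h2 := neg_sub_mem_slice hS (V.op_ne_left hvw).symm hc h1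
  rw [V.op_op] at h2
  have h3 := neg_sub_mem_slice hS hvw hb h2
  have h4 := neg_sub_mem_slice hS (V.op_ne_right hvw).symm hd h3
  rw [V.op_comm v w, V.op_op] at h4
  convert h4 using 1
  abel

/-- The points outside `X` of a subsystem of Moore's construction lie over a single point of
`α`, or are distributed evenly. -/
lemma outer_cases [Fintype α] (hS : (moore V hY).IsClosed S) :
    (∀ p ∈ outer S, ∀ q ∈ outer S, p.1 = q.1) ∨
      ∃ k, k ∣ Fintype.card A ∧ 3 * k ≤ #(outer S) ∧ #(outer S) ≤ Fintype.card α * k := by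
  by_cases H : ∀ p ∈ outer S, ∀ q ∈ outer S, p.1 = q.1
  · exact Or.inl H
  right
  push Not at H
  obtain ⟨⟨v, a⟩, ha, ⟨w, b⟩, hb, hvw⟩ := H
  rw [mem_outer, ← mem_slice] at ha hb
  simp only at hvw
  refine ⟨#(slice S v), card_slice_dvd hS hvw ⟨a, ha⟩ ⟨b, hb⟩, ?_, ?_⟩
  · rw [card_outer_eq_sum_slice]
    calc 3 * #(slice S v) = ∑ i ∈ {v, w, V.op v w}, #(slice S i) := by
          rw [Finset.sum_insert, Finset.sum_insert, Finset.sum_singleton,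
            card_slice_op hS hvw ⟨a, ha⟩, card_slice_eq hS ⟨b, hb⟩ ⟨a, ha⟩]
          · ring
          · simpa using (V.op_ne_right hvw).symm
          · simpa using ⟨hvw, (V.op_ne_left hvw).symm⟩
      _ ≤ _ := Finset.sum_le_sum_of_subset (Finset.subset_univ _)
  · rw [card_outer_eq_sum_slice, ← smul_eq_mul, ← Finset.card_univ]
    refine Finset.sum_le_card_nsmul _ _ _ fun i _ => ?_
    rcases (slice S i).eq_empty_or_nonempty with he | hne
    · simp [he]
    · exact (card_slice_eq hS hne ⟨a, ha⟩).le

end MooreClosed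

section Recognition

variable {R : Type*} [CommRing R] [Fintype R] {t : R} {P : Finset R} {e : R → ZMod 3}
  {ht : 2 * t = 1} {hP : (0 : R) ∉ P} {sX : Squag (Lab P)} {α : Type*} [Fintype α] [Nonempty α]
  {V : Squag α} [AddCommGroup ((ZMod 3 × R) ⊕ (ZMod 3 × R))]

/-- The label set is the only subsystem of its size in Moore's construction over `labExt`. -/
lemma inr_notMem_of_card_eq {S : Finset (Lab P ⊕ α × ((ZMod 3 × R) ⊕ (ZMod 3 × R)))}
    (hS : (moore V (isHom_labExt_inl e ht hP sX)).IsClosed S)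
    (hcard : #S = Fintype.card (Lab P)) (hR : 60 < Fintype.card R)
    (hlt : Fintype.card (Lab P) < 3 * Fintype.card R)
    (hge : Fintype.card R ≤ 2 * Fintype.card (Lab P))
    (hdiv : ∀ k, k ∣ 6 * Fintype.card R → Fintype.card R ≤ k ∨
      288 * Fintype.card α * k ≤ 6 * Fintype.card R)
    (q : α × ((ZMod 3 × R) ⊕ (ZMod 3 × R))) : Sum.inr q ∉ S := by
  intro hq
  have hin := card_inner_le_card_outer (isHom_moore_inl V (isHom_labExt_inl e ht hP sX)) hS hq
  have hsum := card_eq_sum_type S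
  rcases outer_cases hS with h | ⟨k, hk, hk3, hkα⟩
  · obtain ⟨v, a⟩ := q
    let S' : Finset (Lab P ⊕ ((ZMod 3 × R) ⊕ (ZMod 3 × R))) :=
      Finset.univ.filter fun y => lift v y ∈ S
    have hS' : (labExt e ht hP sX).IsClosed S' := by
      intro y hy z hz
      simp only [S', Finset.mem_filter, Finset.mem_univ, true_and] at *
      rw [← moore_lift V (isHom_labExt_inl e ht hP sX)]
      exact hS _ hy _ hz
    have houter : outer S' = slice S v := by
      ext a
      simp [S', mem_slice]
    have hn : #(outer S) = #(slice S v) := by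
      rw [card_outer_eq_sum_slice]
      refine Finset.sum_eq_single_of_mem v (Finset.mem_univ _) fun w _ hw => ?_
      rw [Finset.card_eq_zero, Finset.eq_empty_iff_forall_notMem]
      intro b hb
      exact hw (h (w, b) (mem_outer.2 (mem_slice.1 hb)) (v, a) (mem_outer.2 hq))
    rw [hn] at hsum hin
    have := card_outer_le e ht hP sX hS'
    rw [houter] at this
    rcases this with h1 | h1 | ⟨k, hk, hkR, hk6⟩
    · have : Fintype.card (ZMod 3 × R) ≤ #(slice S v) := by
        rw [← Finset.card_univ]
        refine Finset.card_le_card_of_injOn Sum.inl (fun b _ => ?_) Sum.inl_injective.injOn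
        have := h1 b
        simpa [S', mem_slice] using this
      rw [Fintype.card_prod, ZMod.card] at this
      omega
    · omega
    · have hα : 0 < Fintype.card α := Fintype.card_pos
      rcases hdiv k (hk.mul_left 6) with h2 | h2
      · omega
      · have : 288 * k ≤ 288 * Fintype.card α * k := by
          rw [mul_assoc]
          exact Nat.mul_le_mul_left _ (Nat.le_mul_of_pos_left _ hα)
        omega
  · have hA : Fintype.card ((ZMod 3 × R) ⊕ (ZMod 3 × R)) = 6 * Fintype.card R := by
      rw [Fintype.card_sum, Fintype.card_prod, ZMod.card]
      ring
    rw [hA] at hk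
    rcases hdiv k hk with h2 | h2
    · omega
    · rw [mul_assoc] at h2
      omega

end Recognition

section Special

variable {R : Type*} [CommRing R] {t : R} {P : Finset R} {e : R → ZMod 3}

/-- The three matchings attached to `x`, `y` and `z` differ by a common permutation. -/
def Cyclic (e : R → ZMod 3) (x y z : Lab P) : Prop :=
  ∃ τ : ZMod 3 × R → ZMod 3 × R, ∀ c,
    labMu e x (τ c) = labMu e y c ∧ labMu e y (τ c) = labMu e z c ∧
      labMu e z (τ c) = labMu e x c

lemma Cyclic.rotate {x y z : Lab P} (h : Cyclic e x y z) : Cyclic e y z x := by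
  obtain ⟨τ, hτ⟩ := h
  exact ⟨τ, fun c => ⟨(hτ c).2.1, (hτ c).2.2, (hτ c).1⟩⟩

lemma cyclic_special : Cyclic (P := P) e (Sum.inl 0) (Sum.inl 1) (Sum.inl 2) := by
  refine ⟨fun c => (c.1 + 1, c.2), ?_⟩
  rintro ⟨i, γ⟩
  have h3 : (3 : ZMod 3) = 0 := by decide
  simp only [labMu_inl, Prod.mk.injEq, and_true]
  exact ⟨by ring, by ring, by linear_combination h3⟩

lemma not_cyclic_of_special_special (ht : 2 * t = 1) (hP : (0 : R) ∉ P)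
    (a : {s : ZMod 3 // s ≠ 0} × P) (s s' : ZMod 3) :
    ¬ Cyclic e (Sum.inr a) (Sum.inl s) (Sum.inl s') := by
  rintro ⟨τ, hτ⟩
  obtain ⟨u, p⟩ := a
  obtain ⟨-, h2, h3⟩ := hτ (0, 0)
  generalize τ (0, 0) = c at h2 h3
  obtain ⟨i, γ⟩ := c
  simp only [labMu_inl, labMu_inr, Prod.mk.injEq] at h2 h3
  have := eq_zero_of_lev_mul (r := (p : R)) ht (i := 0 - u) (j := 0)
    (by simpa using u.2) (by linear_combination h2.2 - h3.2)
  exact hP (this ▸ p.2)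

lemma not_cyclic_of_special (he : ∃ γ δ, e γ ≠ e δ) (a b : {s : ZMod 3 // s ≠ 0} × P)
    (s : ZMod 3) : ¬ Cyclic e (Sum.inr a) (Sum.inl s) (Sum.inr b) := by
  rintro ⟨τ, hτ⟩
  obtain ⟨u, p⟩ := a
  obtain ⟨w, q⟩ := b
  have key : ∀ γ, e γ = u - w + u - s := by
    intro γ
    obtain ⟨h1, -, h3⟩ := hτ (0, γ)
    generalize τ (0, γ) = c at h1 h3
    obtain ⟨i, γ'⟩ := c
    simp only [labMu_inl, labMu_inr, Prod.mk.injEq] at h1 h3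
    linear_combination h3.1 - h1.1
  obtain ⟨γ, δ, h⟩ := he
  exact h ((key γ).trans (key δ).symm)

lemma eq_of_cyclic_nonspecial (ht : 2 * t = 1) (h3 : ∀ r : R, 3 * r = 0 → r = 0)
    {a b c : {s : ZMod 3 // s ≠ 0} × P} (h : Cyclic e (Sum.inr a) (Sum.inr b) (Sum.inr c)) :
    a = b := by
  obtain ⟨τ, hτ⟩ := h
  obtain ⟨⟨u, hu⟩, p⟩ := a
  obtain ⟨⟨v, hv⟩, q⟩ := b
  obtain ⟨⟨w, hw⟩, r⟩ := c
  obtain ⟨h1, h2, h4⟩ := hτ (0, 0)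
  generalize τ (0, 0) = c at h1 h2 h4
  obtain ⟨i, γ⟩ := c
  simp only [labMu_inr, Prod.mk.injEq] at h1 h2 h4
  obtain ⟨rfl, rfl, rfl⟩ : u = v ∧ v = w ∧ i = 0 := by
    have := h1.1
    have := h2.1
    have := h4.1
    clear h1 h2 h4 hτ
    revert u v w i
    decide
  have hpq : ((p : R) - q) = 0 := eq_zero_of_lev_mul ht (i := 0 - u) (j := 0) (by simpa using hu)
    (h3 _ (by linear_combination 2 * h1.2 - h2.2 - h4.2))
  rw [Subtype.ext (sub_eq_zero.1 hpq)]

lemma exists_special_of_cyclic (ht : 2 * t = 1) (hP : (0 : R) ∉ P)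
    (h3 : ∀ r : R, 3 * r = 0 → r = 0) (he : ∃ γ δ, e γ ≠ e δ) {x y z : Lab P}
    (h : Cyclic e x y z) (hxy : x ≠ y) : ∃ s, x = Sum.inl s := by
  rcases x with s | a
  · exact ⟨s, rfl⟩
  rcases y with s | b <;> rcases z with s' | c
  · exact absurd h (not_cyclic_of_special_special ht hP a s s')
  · exact absurd h (not_cyclic_of_special he a c s)
  · exact absurd h.rotate (not_cyclic_of_special he b a s')
  · exact absurd (congrArg _ (eq_of_cyclic_nonspecial ht h3 h)) hxy

end Special

section Rigid

variable {R : Type*} [CommRing R] {t : R} {P : Finset R}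

/-- The indicator function of `{0, 1}`. -/
def twist (R : Type*) [CommRing R] (r : R) : ZMod 3 := if r = 0 ∨ r = 1 then 1 else 0

/-- The conditions on `R` and `P` ensuring that the extension has no automorphism. -/
structure Rigid (t : R) (P : Finset R) : Prop where
  half : 2 * t = 1
  zero_notMem : (0 : R) ∉ P
  one_mem : (1 : R) ∈ P
  neg_one_notMem : (-1 : R) ∉ P
  half_notMem : t ∉ P
  neg_half_notMem : -t ∉ P
  nontrivial : (1 : R) ≠ 0
  three : ∀ r : R, 3 * r = 0 → r = 0
  induction : ∀ p : R → Prop, p 0 → (∀ r, p r → p (r + 1)) → ∀ r, p r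

lemma Rigid.neg_one_ne_zero (H : Rigid t P) : (-1 : R) ≠ 0 := fun h =>
  H.nontrivial (by linear_combination -h)

lemma Rigid.neg_one_ne_one (H : Rigid t P) : (-1 : R) ≠ 1 := fun h =>
  H.nontrivial (by linear_combination -t * h - H.half)

lemma Rigid.twist_neg_one (H : Rigid t P) : twist R (-1) = 0 := by
  simp only [twist, H.neg_one_ne_zero, H.neg_one_ne_one, or_self, if_false]

lemma twist_zero : twist R 0 = 1 := by simp [twist]

lemma twist_one : twist R 1 = 1 := by simp [twist]

lemma Rigid.exists_third (H : Rigid t P) (a b : R) : ∃ c, c ≠ a ∧ c ≠ b := by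
  by_contra! hcon
  have h01 := H.nontrivial
  have h02 := H.neg_one_ne_zero
  have h12 := H.neg_one_ne_one
  rcases eq_or_ne 0 a with rfl | h0
  · exact h12 ((hcon _ h02).trans (hcon _ h01).symm)
  · rcases eq_or_ne 1 a with rfl | h1
    · exact h02 ((hcon _ h12).trans (hcon _ h0).symm)
    · exact h01 ((hcon _ h1).trans (hcon _ h0).symm)

variable [Fintype R] {gX : Lab P → Lab P} {gB gC : ZMod 3 × R → ZMod 3 × R}

lemma Rigid.map_special (H : Rigid t P) (hX : Function.Injective gX)
    (hC : Function.Injective gC)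
    (hmu : ∀ x c, gB (labMu (twist R) x c) = labMu (twist R) (gX x) (gC c)) (s : ZMod 3) :
    ∃ s', gX (Sum.inl s) = Sum.inl s' := by
  have hCs := Finite.injective_iff_surjective.1 hC
  have hcyc : Cyclic (twist R) (gX (Sum.inl 0)) (gX (Sum.inl 1)) (gX (Sum.inl 2)) := by
    obtain ⟨τ, hτ⟩ := cyclic_special (P := P) (e := twist R)
    refine ⟨fun c => gC (τ (Function.surjInv hCs c)), fun c => ?_⟩
    obtain ⟨h1, h2, h3⟩ := hτ (Function.surjInv hCs c)
    have hc := Function.surjInv_eq hCs c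
    refine ⟨?_, ?_, ?_⟩
    · rw [← hmu, h1, hmu, hc]
    · rw [← hmu, h2, hmu, hc]
    · rw [← hmu, h3, hmu, hc]
  have he : ∃ γ δ, twist R γ ≠ twist R δ :=
    ⟨0, -1, by rw [twist_zero, H.twist_neg_one]; decide⟩
  have hne : ∀ {i j : ZMod 3}, i ≠ j → gX (Sum.inl i) ≠ gX (Sum.inl j) := fun h h' =>
    h (Sum.inl_injective (hX h'))
  rcases zmod_three_eq s with rfl | rfl | rfl
  · exact exists_special_of_cyclic H.half H.zero_notMem H.three he hcyc (hne (by decide))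
  · exact exists_special_of_cyclic H.half H.zero_notMem H.three he hcyc.rotate (hne (by decide))
  · exact exists_special_of_cyclic H.half H.zero_notMem H.three he hcyc.rotate.rotate
      (hne (by decide))

lemma exists_coordinate (hB : Function.Injective gB)
    (hmu : ∀ x c, gB (labMu (twist R) x c) = labMu (twist R) (gX x) (gC c))
    (hsp : ∀ s, ∃ s', gX (Sum.inl s) = Sum.inl s') :
    ∃ f : R → R, Function.Injective f ∧ (∀ i γ, (gB (i, γ)).2 = f γ) ∧
      ∀ i γ, (gC (i, γ)).2 = f γ := by
  have key : ∀ i j γ, (gB (j, γ)).2 = (gC (i, γ)).2 := by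
    intro i j γ
    obtain ⟨s', hs'⟩ := hsp (j - i - twist R γ)
    have := hmu (Sum.inl (j - i - twist R γ)) (i, γ)
    rw [hs', labMu_inl] at this
    rw [show i + (j - i - twist R γ) + twist R γ = j by ring] at this
    rw [this]
    rfl
  refine ⟨fun γ => (gC (0, γ)).2, ?_, fun i γ => key 0 i γ, fun i γ => by
    rw [← key i 0 γ, key 0 0 γ]⟩
  refine Finite.injective_iff_surjective.2 fun δ => ?_
  obtain ⟨⟨j, γ⟩, h⟩ := Finite.injective_iff_surjective.1 hB (0, δ)
  exact ⟨γ, by simp only [← key 0 j γ, h]⟩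

end Rigid

section Coordinates

variable {R : Type*} [CommRing R] {t : R} {P : Finset R}
  {gX : Lab P → Lab P} {gB gC : ZMod 3 × R → ZMod 3 × R} {f : R → R}

lemma map_midPt (hfB : ∀ i γ, (gB (i, γ)).2 = f γ)
    (hfC : ∀ i γ, (gC (i, γ)).2 = f γ)
    (hkap : ∀ c d, Sum.map gB gC (labKap t P c d) = labKap t P (gC c) (gC d))
    (i : ZMod 3) {γ δ : R} (h : γ ≠ δ) :
    f (t * (γ + δ)) = t * (f γ + f δ) ∧
      (gB (i, t * (γ + δ))).1 = -(gC (i, γ)).1 - (gC (i, δ)).1 := by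
  have h3 : -i - i = i := by revert i; decide
  have hcd : (i, γ) ≠ (i, δ) := fun h' => h (congrArg Prod.snd h')
  have hk := hkap (i, γ) (i, δ)
  rw [labKap_of_not_joined hcd fun ⟨p, hp⟩ => hp.fst_ne hcd rfl] at hk
  have := (labKap_eq_inl hk.symm).2.2
  simp only [midPt, h3] at this
  rw [← hfB i, this]
  exact ⟨by simp only [hfC], rfl⟩

lemma Rigid.fst_map_eq (H : Rigid t P) (hf : Function.Injective f)
    (hfB : ∀ i γ, (gB (i, γ)).2 = f γ)
    (hmid : ∀ γ δ, γ ≠ δ → f (t * (γ + δ)) = t * (f γ + f δ))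
    (hbose : ∀ b d, gB (boseOp t b d) = boseOp t (gB b) (gB d))
    (i : ZMod 3) {γ δ : R} (h : γ ≠ δ) :
    (gB (i, γ)).1 = (gB (i, δ)).1 ∧ (gB (i + 1, t * (γ + δ))).1 = (gB (i, γ)).1 + 1 := by
  have hb := hbose (i, γ) (i, δ)
  rw [boseOp_same i h] at hb
  have hfne : f γ ≠ f δ := hf.ne h
  have h1 : gB (i, γ) = ((gB (i, γ)).1, f γ) := by rw [← hfB i γ]
  have h2 : gB (i, δ) = ((gB (i, δ)).1, f δ) := by rw [← hfB i δ]
  have h3 : (gB (i + 1, t * (γ + δ))).2 = t * (f γ + f δ) := by rw [hfB, hmid _ _ h]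
  generalize (gB (i, γ)).1 = j at *
  generalize (gB (i, δ)).1 = k at *
  rw [h1, h2] at hb
  rw [hb] at h3 ⊢
  have key : ∀ a b : R, 2 * b - a = t * (a + b) → a = b := fun a b hab => by
    have := H.three (b - a) (by linear_combination 2 * hab + (a + b) * H.half)
    exact (sub_eq_zero.1 this).symm
  rcases zmod_three_cases j k with rfl | rfl | rfl
  · exact ⟨rfl, by rw [boseOp_same _ hfne]⟩
  · rw [boseOp_up _ hfne] at h3
    exact absurd (key _ _ h3) hfne
  · rw [boseOp_down _ hfne] at h3
    exact absurd (key _ _ (h3.trans (by ring))) hfne.symm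

/-- The maps `gB` and `gC` shift the first coordinate by a constant. -/
lemma Rigid.exists_shift (H : Rigid t P) (hf : Function.Injective f)
    (hfB : ∀ i γ, (gB (i, γ)).2 = f γ) (hfC : ∀ i γ, (gC (i, γ)).2 = f γ)
    (hbose : ∀ b d, gB (boseOp t b d) = boseOp t (gB b) (gB d))
    (hkap : ∀ c d, Sum.map gB gC (labKap t P c d) = labKap t P (gC c) (gC d)) :
    ∃ r, (∀ i γ, gB (i, γ) = (i + r, f γ)) ∧ ∀ i γ, gC (i, γ) = (i + r, f γ) := by
  have hmid := fun i {γ δ : R} (h : γ ≠ δ) => map_midPt hfB hfC hkap i h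
  have hfst := fun i {γ δ : R} (h : γ ≠ δ) =>
    H.fst_map_eq hf hfB (fun γ δ h => (hmid 0 h).1) hbose i h
  have hconst : ∀ i γ, (gB (i, γ)).1 = (gB (i, 0)).1 := fun i γ => by
    rcases eq_or_ne γ 0 with rfl | h
    · rfl
    · exact (hfst i h).1
  have hsucc : ∀ i, (gB (i + 1, 0)).1 = (gB (i, 0)).1 + 1 := fun i => by
    rw [← hconst (i + 1) (t * (0 + 1)), (hfst i H.nontrivial.symm).2]
  have hB : ∀ i γ, (gB (i, γ)).1 = i + (gB (0, 0)).1 := by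
    intro i γ
    rw [hconst]
    have h1 := hsucc 0
    have h2 := hsucc 1
    have h11 : (1 + 1 : ZMod 3) = 2 := by decide
    rw [zero_add] at h1
    rw [h11, h1] at h2
    rcases zmod_three_eq i with rfl | rfl | rfl
    · rw [zero_add]
    · rw [h1, add_comm]
    · rw [h2, ← h11]
      ring
  refine ⟨(gB (0, 0)).1, fun i γ => Prod.ext (hB i γ) (hfB i γ),
    fun i γ => Prod.ext ?_ (hfC i γ)⟩
  obtain ⟨δ, hδ, -⟩ := H.exists_third γ γ
  obtain ⟨ε, hεγ, hεδ⟩ := H.exists_third γ δ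
  have h1 := (hmid i hδ).2
  have h2 := (hmid i hεγ).2
  have h3 := (hmid i hεδ).2
  rw [hB] at h1 h2 h3
  have h30 : (3 : ZMod 3) = 0 := by decide
  linear_combination -h1 - h2 + h3 + (gC (i, γ)).1 * h30

/-- The twist pins `0` and `1` down up to order. -/
lemma Rigid.map_zero_or_one (H : Rigid t P) {r : ZMod 3}
    (hB : ∀ i γ, gB (i, γ) = (i + r, f γ)) (hC : ∀ i γ, gC (i, γ) = (i + r, f γ))
    (hmu : ∀ x c, gB (labMu (twist R) x c) = labMu (twist R) (gX x) (gC c))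
    (hsp : ∀ s, ∃ s', gX (Sum.inl s) = Sum.inl s') :
    (f 0 = 0 ∨ f 0 = 1) ∧ (f 1 = 0 ∨ f 1 = 1) := by
  obtain ⟨s, hs⟩ := hsp 0
  have key : ∀ γ, s + twist R (f γ) = twist R γ := by
    intro γ
    have h := hmu (Sum.inl 0) (0, γ)
    rw [hs, hC, labMu_inl, hB, labMu_inl] at h
    linear_combination -(congrArg Prod.fst h)
  have h0 := key 0
  have h1 := key 1
  have h2 := key (-1)
  rw [twist_zero] at h0
  rw [twist_one] at h1
  rw [H.twist_neg_one] at h2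
  have htw : ∀ γ : R, twist R γ = 0 ∨ twist R γ = 1 := fun γ => by
    rw [twist]
    split_ifs <;> simp
  have hs0 : s = 0 := by
    have ha := htw (f 0)
    have hb := htw (f (-1))
    generalize twist R (f 0) = a at *
    generalize twist R (f (-1)) = b at *
    clear h1 hs key
    revert a b s
    decide
  have hmem : ∀ γ : R, twist R γ = 1 → γ = 0 ∨ γ = 1 := fun γ h => by
    by_contra h'
    rw [twist, if_neg h'] at h
    exact absurd h (by decide)
  rw [hs0, zero_add] at h0 h1
  exact ⟨hmem _ h0, hmem _ h1⟩

lemma Rigid.shift_eq_zero (H : Rigid t P) (hf : Function.Injective f) {r : ZMod 3}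
    (hB : ∀ i γ, gB (i, γ) = (i + r, f γ)) (hC : ∀ i γ, gC (i, γ) = (i + r, f γ))
    (hmu : ∀ x c, gB (labMu (twist R) x c) = labMu (twist R) (gX x) (gC c))
    (h0 : f 0 = 0 ∨ f 0 = 1) (h1 : f 1 = 0 ∨ f 1 = 1) : r = 0 ∧ ∀ γ, f γ = γ := by
  have hdiff : f 1 - f 0 = 1 ∨ f 1 - f 0 = -1 := by
    have hne := hf.ne H.nontrivial
    rcases h0 with h0 | h0 <;> rcases h1 with h1 | h1 <;> rw [h0, h1] at hne ⊢
    · exact absurd rfl hne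
    · exact Or.inl (by ring)
    · exact Or.inr (by ring)
    · exact absurd rfl hne
  have hl := hmu (Sum.inr (⟨2, by decide⟩, ⟨1, H.one_mem⟩))
  rcases hx : gX (Sum.inr (⟨2, by decide⟩, ⟨1, H.one_mem⟩)) with s | ⟨⟨s, hs⟩, p, hp⟩
  · have := hl (0, 0)
    rw [hx, hC, labMu_inl, labMu_inr, hB] at this
    have h20 : (0 - 2 : ZMod 3) = 1 := by decide
    have := congrArg Prod.snd this
    simp only [h20, lev_one, lev_zero, sub_zero, mul_one, zero_add] at this
    exact absurd (hf this) H.nontrivial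
  · have hstep : ∀ i γ, s = 2 ∧
        f (γ + (lev (i - 2) - lev i)) = f γ + (lev (i + r - 2) - lev (i + r)) * p := by
      intro i γ
      have := hl (i, γ)
      rw [hx, hC, labMu_inr, labMu_inr, hB] at this
      simp only [Prod.mk.injEq, mul_one] at this
      have hs2 : s = 2 := by linear_combination -this.1
      subst hs2
      exact ⟨rfl, this.2⟩
    have e02 : (0 - 2 : ZMod 3) = 1 := by decide
    have e12 : (1 - 2 : ZMod 3) = 2 := by decide
    have s0 := fun γ => (hstep 0 γ).2
    have s1 := fun γ => (hstep 1 γ).2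
    simp only [e02, lev_one, lev_zero, sub_zero, zero_add] at s0
    simp only [e12, lev_one, lev_two] at s1
    have s00 := s0 0
    rw [zero_add] at s00
    have hid : r ≠ 2 → p = 1 ∧ ∀ γ, f γ = γ := by
      intro hr
      have hlev : (lev (r - 2) - lev r : R) = 1 := by
        rcases zmod_three_eq r with rfl | rfl | rfl
        · rw [e02]; simp
        · rw [e12]; simp only [lev_two, lev_one]; ring
        · exact absurd rfl hr
      simp only [hlev, one_mul] at s0 s00
      have hp1 : p = 1 := by
        rcases hdiff with h | h
        · linear_combination h - s00
        · exact absurd hp (by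
            rw [show p = -1 by linear_combination h - s00]
            exact H.neg_one_notMem)
      refine ⟨hp1, H.induction _ ?_ fun γ hγ => by rw [s0, hγ, hp1]⟩
      rcases h0 with h | h
      · exact h
      · rcases h1 with h' | h'
        · exact absurd (show (1 : R) = -1 by linear_combination -h + h' - s00 - hp1)
            H.neg_one_ne_one.symm
        · exact absurd (h'.trans h.symm) (hf.ne H.nontrivial)
    rcases zmod_three_eq r with rfl | rfl | rfl
    · exact ⟨rfl, (hid (by decide)).2⟩
    · obtain ⟨rfl, hfid⟩ := hid (by decide)
      have := s1 0
      rw [hfid, hfid, show (1 + 1 - 2 : ZMod 3) = 0 by decide, show (1 + 1 : ZMod 3) = 2 by decide,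
        lev_zero, lev_two] at this
      exact absurd (H.three 1 (by linear_combination this)) H.nontrivial
    · rw [sub_self, lev_zero, lev_two] at s00
      rcases hdiff with h | h
      · exact absurd hp (by
          rw [show p = -t by linear_combination -p * H.half + t * s00 - t * h]
          exact H.neg_half_notMem)
      · exact absurd hp (by
          rw [show p = t by linear_combination -p * H.half + t * s00 - t * h]
          exact H.half_notMem)

/-- The frame attached to a rigid pair has no nontrivial automorphism. -/
lemma Rigid.eq_id [Fintype R] (H : Rigid t P) (hX : Function.Injective gX)
    (hB : Function.Injective gB) (hC : Function.Injective gC)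
    (hmu : ∀ x c, gB (labMu (twist R) x c) = labMu (twist R) (gX x) (gC c))
    (hbose : ∀ b d, gB (boseOp t b d) = boseOp t (gB b) (gB d))
    (hkap : ∀ c d, Sum.map gB gC (labKap t P c d) = labKap t P (gC c) (gC d)) :
    (∀ x, gX x = x) ∧ (∀ b, gB b = b) ∧ ∀ c, gC c = c := by
  have hsp := H.map_special hX hC hmu
  obtain ⟨f, hf, hfB, hfC⟩ := exists_coordinate hB hmu hsp
  obtain ⟨r, hrB, hrC⟩ := H.exists_shift hf hfB hfC hbose hkap
  obtain ⟨h0, h1⟩ := H.map_zero_or_one hrB hrC hmu hsp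
  obtain ⟨rfl, hid⟩ := H.shift_eq_zero hf hrB hrC hmu h0 h1
  have hB' : ∀ b, gB b = b := fun ⟨i, γ⟩ => by rw [hrB, hid, add_zero]
  have hC' : ∀ c, gC c = c := fun ⟨i, γ⟩ => by rw [hrC, hid, add_zero]
  refine ⟨fun x => ?_, hB', hC'⟩
  refine (labMu_injective (twist R) H.half H.zero_notMem (0, 0) ?_).symm
  have := hmu x (0, 0)
  rwa [hB', hC'] at this

end Coordinates

section Extension

variable {R : Type*} [CommRing R] {t : R} {P : Finset R}

lemma IsClosed.image {α β : Type*} [Fintype α] [DecidableEq β] {s : Squag α} {r : Squag β} {f : α → β}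
    (hf : IsHom s r f) : r.IsClosed (Finset.univ.image f) := by
  intro a ha b hb
  obtain ⟨a, -, rfl⟩ := Finset.mem_image.1 ha
  obtain ⟨b, -, rfl⟩ := Finset.mem_image.1 hb
  rw [← hf]
  exact Finset.mem_image_of_mem _ (Finset.mem_univ _)

/-- A function constant along the triples through the labels is constant. -/
lemma Rigid.eq_of_label_invariant (H : Rigid t P) (sX : Squag (Lab P)) {β : Type*}
    {F : (ZMod 3 × R) ⊕ (ZMod 3 × R) → β}
    (hF : ∀ x a a', (labExt (twist R) H.half H.zero_notMem sX).op (Sum.inl x) (Sum.inr a) =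
      Sum.inr a' → F a' = F a) (a b : (ZMod 3 × R) ⊕ (ZMod 3 × R)) : F a = F b := by
  have hmu : ∀ (x : Lab P) c, F (Sum.inl (labMu (twist R) x c)) = F (Sum.inr c) := fun x c =>
    hF x _ _ rfl
  have hsp : ∀ i j γ, F (Sum.inl (j, γ)) = F (Sum.inr (i, γ)) := fun i j γ => by
    rw [← hmu (Sum.inl (j - i - twist R γ)) (i, γ), labMu_inl]
    congr 3
    ring
  have hstep : ∀ γ, F (Sum.inl (0, γ)) = F (Sum.inl (0, 0)) := by
    refine H.induction _ rfl fun γ hγ => ?_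
    rw [← hγ, hsp 0 0 γ, ← hmu (Sum.inr (⟨2, by decide⟩, ⟨1, H.one_mem⟩)) (0, γ), labMu_inr,
      hsp 0 0, ← hsp 0 (0 + 2)]
    have h20 : (0 - 2 : ZMod 3) = 1 := by decide
    simp only [h20, lev_one, lev_zero, sub_zero, mul_one]
  have hall : ∀ a, F a = F (Sum.inl (0, 0)) := by
    rintro (⟨i, γ⟩ | ⟨i, γ⟩)
    · rw [hsp 0 i, ← hsp 0 0, hstep]
    · rw [← hsp i 0, hstep]
  rw [hall a, hall b]

variable [Fintype R]

/-- An automorphism of the extension preserving the labels preserves both copies of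
`ℤ/3 × R`. -/
lemma Rigid.exists_map_inl (H : Rigid t P) (sX : Squag (Lab P)) (hR : 5 < Fintype.card R)
    (hdiv : ∀ k, k ∣ Fintype.card R → k < Fintype.card R → 3 * k ≤ Fintype.card R)
    {g : Lab P ⊕ ((ZMod 3 × R) ⊕ (ZMod 3 × R)) → Lab P ⊕ ((ZMod 3 × R) ⊕ (ZMod 3 × R))}
    (hg : IsHom (labExt (twist R) H.half H.zero_notMem sX)
      (labExt (twist R) H.half H.zero_notMem sX) g)
    (hi : Function.Injective g) (hA : ∀ a, ∃ a', g (Sum.inr a) = Sum.inr a') :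
    (∀ b, ∃ b', g (Sum.inr (Sum.inl b)) = Sum.inr (Sum.inl b')) ∧
      ∀ c, ∃ c', g (Sum.inr (Sum.inr c)) = Sum.inr (Sum.inr c') := by
  set S := Finset.univ.image fun b : ZMod 3 × R => g (Sum.inr (Sum.inl b)) with hS
  have hclosed : (labExt (twist R) H.half H.zero_notMem sX).IsClosed S :=
    IsClosed.image (s := bose H.half) (hg.comp (f := fun b => Sum.inr (Sum.inl b)) fun _ _ => rfl)
  have hSinj : Function.Injective fun b : ZMod 3 × R => g (Sum.inr (Sum.inl b)) :=
    hi.comp (Sum.inr_injective.comp Sum.inl_injective)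
  have hcard : #(outer S) = 3 * Fintype.card R := by
    have hin : inner S = ∅ := by
      rw [Finset.eq_empty_iff_forall_notMem]
      intro x hx
      rw [mem_inner] at hx
      obtain ⟨b, -, hb⟩ := Finset.mem_image.1 hx
      obtain ⟨a', ha'⟩ := hA (Sum.inl b)
      exact Sum.inr_ne_inl (ha'.symm.trans hb)
    have h1 := card_eq_sum_type S
    rw [hin, Finset.card_empty, zero_add, hS, Finset.card_image_of_injective _ hSinj] at h1
    rw [← h1, Finset.card_univ, Fintype.card_prod, ZMod.card]
  have hall : ∀ b, Sum.inr (Sum.inl b) ∈ S := by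
    rcases card_outer_le (twist R) H.half H.zero_notMem sX hclosed with h | h | ⟨k, hk, hlt, h⟩
    · exact h
    · omega
    · have := hdiv k hk hlt
      omega
  have hpre : ∀ b, ∃ b', g (Sum.inr (Sum.inl b')) = Sum.inr (Sum.inl b) := fun b => by
    obtain ⟨b', -, hb'⟩ := Finset.mem_image.1 (hall b)
    exact ⟨b', hb'⟩
  choose k hk using hpre
  have hkinj : Function.Injective k := fun b b' h => by
    have := hk b
    rw [h, hk b'] at this
    exact (Sum.inl_injective (Sum.inr_injective this)).symm
  have hks := Finite.injective_iff_surjective.1 hkinj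
  refine ⟨fun b => ?_, fun c => ?_⟩
  · obtain ⟨b', rfl⟩ := hks b
    exact ⟨b', hk b'⟩
  · obtain ⟨b | c', h⟩ := hA (Sum.inr c)
    · have := hi (h.trans (hk b).symm)
      simp at this
    · exact ⟨c', h⟩

/-- The extension attached to a rigid pair has no nontrivial automorphism preserving the
labels. -/
lemma Rigid.labExt_eq_id (H : Rigid t P) (sX : Squag (Lab P)) (hR : 5 < Fintype.card R)
    (hdiv : ∀ k, k ∣ Fintype.card R → k < Fintype.card R → 3 * k ≤ Fintype.card R)
    {gX : Lab P → Lab P} {gA : (ZMod 3 × R) ⊕ (ZMod 3 × R) → (ZMod 3 × R) ⊕ (ZMod 3 × R)}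
    (hg : IsHom (labExt (twist R) H.half H.zero_notMem sX)
      (labExt (twist R) H.half H.zero_notMem sX) (Sum.map gX gA))
    (hi : Function.Injective (Sum.map gX gA)) : (∀ x, gX x = x) ∧ ∀ a, gA a = a := by
  obtain ⟨hB, hC⟩ := H.exists_map_inl sX hR hdiv hg hi fun a => ⟨gA a, rfl⟩
  have hgA := (Sum.map_injective.1 hi).2
  choose gB hgB using fun b => (hB b).imp fun _ h => Sum.inr_injective h
  choose gC hgC using fun c => (hC c).imp fun _ h => Sum.inr_injective h
  have hmu : ∀ x c, gB (labMu (twist R) x c) = labMu (twist R) (gX x) (gC c) := fun x c => by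
    have h : Sum.inr (gA (Sum.inl (labMu (twist R) x c))) =
      (labExt (twist R) H.half H.zero_notMem sX).op (Sum.inl (gX x)) (Sum.inr (gA (Sum.inr c))) :=
      hg (Sum.inl x) (Sum.inr (Sum.inr c))
    rw [hgB, hgC] at h
    exact Sum.inl_injective (Sum.inr_injective h)
  have hbose : ∀ b d, gB (boseOp t b d) = boseOp t (gB b) (gB d) := fun b d => by
    have h : Sum.inr (gA (Sum.inl (boseOp t b d))) =
      (labExt (twist R) H.half H.zero_notMem sX).op (Sum.inr (gA (Sum.inl b)))
        (Sum.inr (gA (Sum.inl d))) := hg (Sum.inr (Sum.inl b)) (Sum.inr (Sum.inl d))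
    rw [hgB, hgB, hgB] at h
    exact Sum.inl_injective (Sum.inr_injective h)
  have hsum : ∀ a, gA a = Sum.map gB gC a := by
    rintro (b | c)
    · exact hgB b
    · exact hgC c
  have hkap : ∀ c d, Sum.map gB gC (labKap t P c d) = labKap t P (gC c) (gC d) := fun c d => by
    have h : Sum.inr (gA (labKap t P c d)) =
      (labExt (twist R) H.half H.zero_notMem sX).op (Sum.inr (gA (Sum.inr c)))
        (Sum.inr (gA (Sum.inr d))) := hg (Sum.inr (Sum.inr c)) (Sum.inr (Sum.inr d))
    rw [hsum, hgC, hgC] at h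
    exact Sum.inr_injective h
  rw [funext hsum, Sum.map_injective] at hgA
  obtain ⟨h1, h2, h3⟩ := H.eq_id (Sum.map_injective.1 hi).1 hgA.1 hgA.2 hmu hbose hkap
  refine ⟨h1, ?_⟩
  rintro (b | c)
  · rw [hgB, h2]
  · rw [hgC, h3]

end Extension

section Automorphisms

variable {α X A : Type*} [Nonempty α] [AddCommGroup A] {sX : Squag X} {Y : Squag (X ⊕ A)}

lemma isHom_moore_map {V : Squag α} (hY : IsHom sX Y Sum.inl) {h : α → α} (hh : IsHom V V h)
    (hi : Function.Injective h) :
    IsHom (moore V hY) (moore V hY) (Sum.map id (Prod.map h id)) := by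
  have hl : ∀ v (p : X ⊕ A), Sum.map id (Prod.map h id) (lift v p) = lift (h v) p := by
    rintro v (x | a) <;> rfl
  intro p q
  rcases exists_lift_or (Classical.arbitrary α) p q with
    ⟨v, p, q, rfl, rfl⟩ | ⟨v, w, a, b, hvw, rfl, rfl⟩
  · rw [moore_lift, hl, hl, hl, moore_lift]
  · rw [moore_of_ne V hY hvw]
    simp only [Sum.map_inr, Prod.map_apply, id_eq]
    rw [moore_of_ne V hY (hi.ne hvw), hh]

end Automorphisms

section Automorphisms

variable {R : Type*} [CommRing R] {t : R} {P : Finset R} [Fintype R]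
  {α : Type*} [Fintype α] [Nonempty α] {V : Squag α}
  [AddCommGroup ((ZMod 3 × R) ⊕ (ZMod 3 × R))]

/-- Every automorphism of Moore's construction over the rigid extension comes from an
automorphism of `V`. -/
lemma Rigid.exists_eq_map (H : Rigid t P) (sX : Squag (Lab P)) (hR : 60 < Fintype.card R)
    (hlt : Fintype.card (Lab P) < 3 * Fintype.card R)
    (hge : Fintype.card R ≤ 2 * Fintype.card (Lab P))
    (hdiv : ∀ k, k ∣ 6 * Fintype.card R → Fintype.card R ≤ k ∨
      288 * Fintype.card α * k ≤ 6 * Fintype.card R)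
    {g : Lab P ⊕ α × ((ZMod 3 × R) ⊕ (ZMod 3 × R)) → Lab P ⊕ α × ((ZMod 3 × R) ⊕ (ZMod 3 × R))}
    (hg : IsHom (moore V (isHom_labExt_inl (twist R) H.half H.zero_notMem sX))
      (moore V (isHom_labExt_inl (twist R) H.half H.zero_notMem sX)) g)
    (hi : Function.Injective g) :
    ∃ h : α → α, IsHom V V h ∧ Function.Injective h ∧ g = Sum.map id (Prod.map h id) := by
  set hY := isHom_labExt_inl (twist R) H.half H.zero_notMem sX
  have hX : ∀ x, ∃ y, g (Sum.inl x) = Sum.inl y := by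
    intro x
    rcases hx : g (Sum.inl x) with y | q
    · exact ⟨y, rfl⟩
    · have := inr_notMem_of_card_eq (V := V)
        (S := Finset.univ.image fun x => g (Sum.inl x))
        (IsClosed.image (hg.comp (isHom_moore_inl V hY)))
        (Finset.card_image_of_injective _ (hi.comp Sum.inl_injective)) hR hlt hge hdiv q
      exact absurd (Finset.mem_image.2 ⟨x, Finset.mem_univ _, hx⟩) this
  choose gX hgX using hX
  have hgXi : Function.Injective gX := fun x y h => by
    have := hgX x
    rw [h, ← hgX y] at this
    exact Sum.inl_injective (hi this)
  have hgXs := Finite.injective_iff_surjective.1 hgXi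
  have hA : ∀ q, ∃ q', g (Sum.inr q) = Sum.inr q' := by
    intro q
    rcases hq : g (Sum.inr q) with y | q'
    · obtain ⟨x, rfl⟩ := hgXs y
      exact absurd (hi (hq.trans (hgX x).symm)) Sum.inr_ne_inl
    · exact ⟨q', rfl⟩
  choose gA hgA using hA
  have hfst : ∀ v a, (gA (v, a)).1 = (gA (v, 0)).1 := by
    intro v a
    refine H.eq_of_label_invariant sX (F := fun a => (gA (v, a)).1) (fun x a a' h => ?_) a 0
    have h1 := hg (Sum.inl x) (Sum.inr (v, a))
    have h2 := moore_lift V hY v (Sum.inl x) (Sum.inr a)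
    rw [h] at h2
    simp only [lift_inl, lift_inr] at h2
    rw [h2, hgX, hgA, hgA] at h1
    have h3 := moore_lift V hY (gA (v, a)).1 (Sum.inl (gX x)) (Sum.inr (gA (v, a)).2)
    simp only [lift_inl, lift_inr] at h3
    rw [h3] at h1
    rcases hz : (labExt (twist R) H.half H.zero_notMem sX).op (Sum.inl (gX x))
      (Sum.inr (gA (v, a)).2) with y | b
    · rw [hz] at h1
      exact absurd h1 Sum.inr_ne_inl
    · rw [hz, lift_inr] at h1
      have h4 := Sum.inr_injective h1
      exact (congrArg Prod.fst h4 :)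
  have hlift : ∀ v y, g (lift v y) =
      lift (gA (v, 0)).1 (Sum.map gX (fun a => (gA (v, a)).2) y) := by
    rintro v (x | a)
    · exact hgX x
    · rw [lift_inr, hgA, Sum.map_inr, lift_inr, ← hfst v a]
  have hid : ∀ v, (∀ x, gX x = x) ∧ ∀ a, (gA (v, a)).2 = a := by
    intro v
    refine H.labExt_eq_id sX (by omega) (fun k hk hlt' => ?_) (gA := fun a => (gA (v, a)).2)
      (fun p q => ?_) (fun p q hpq => ?_)
    · have hv := Fintype.card_pos (α := α)
      rcases hdiv k (hk.mul_left 6) with h | h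
      · omega
      · nlinarith
    · apply lift_injective (gA (v, 0)).1
      rw [← hlift, ← moore_lift V hY, hg, hlift, hlift, moore_lift]
    · apply lift_injective v
      apply hi
      rw [hlift, hlift, hpq]
  have hgeq : ∀ v y, g (lift v y) = lift (gA (v, 0)).1 y := by
    intro v y
    rw [hlift]
    congr 1
    rcases y with x | a
    · rw [Sum.map_inl, (hid v).1]
    · rw [Sum.map_inr, (hid v).2]
  have hinj : Function.Injective fun v => (gA (v, 0)).1 := by
    intro v w hvw
    have h1 := hgeq v (Sum.inr 0)
    have h2 := hgeq w (Sum.inr 0)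
    simp only at hvw
    rw [hvw, ← h2] at h1
    exact congrArg Prod.fst (Sum.inr_injective (hi h1))
  refine ⟨fun v => (gA (v, 0)).1, fun v w => ?_, hinj, ?_⟩
  · have h0 : ∀ v w, Sum.inr (V.op v w, 0) = (moore V hY).op (Sum.inr (v, 0)) (Sum.inr (w, 0)) :=
      isHom_moore_zero V hY
    have h1 := hgeq (V.op v w) (Sum.inr 0)
    rw [lift_inr, h0, hg] at h1
    have h2 := hgeq v (Sum.inr 0)
    have h3 := hgeq w (Sum.inr 0)
    simp only [lift_inr] at h1 h2 h3
    rw [h2, h3, ← h0] at h1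
    exact (congrArg Prod.fst (Sum.inr_injective h1)).symm
  · funext p
    rcases p with x | ⟨v, a⟩
    · exact hgeq (Classical.arbitrary α) (Sum.inl x)
    · exact hgeq v (Sum.inr a)

end Automorphisms

section Prescribes

variable {α β γ δ : Type*}

/-- `U` contains disjoint copies of `W` and of `V`, and its automorphisms are exactly the
extensions, one for each, of the automorphisms of the copy of `V`. -/
def Prescribes (W : Squag β) (V : Squag α) (U : Squag γ) : Prop :=
  ∃ (ψ : β → γ) (φ : α → γ) (E : (α → α) → γ → γ),
    (IsHom W U ψ ∧ Function.Injective ψ) ∧ (IsHom V U φ ∧ Function.Injective φ) ∧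
    (∀ b a, ψ b ≠ φ a) ∧
    (∀ h, IsHom V V h → Function.Injective h →
      IsHom U U (E h) ∧ Function.Injective (E h) ∧ ∀ a, E h (φ a) = φ (h a)) ∧
    ∀ g, IsHom U U g → Function.Injective g →
      ∃ h, IsHom V V h ∧ Function.Injective h ∧ g = E h

lemma Prescribes.map {W : Squag β} {V : Squag α} {U : Squag γ} (hU : Prescribes W V U)
    (e : γ ≃ δ) : Prescribes W V (U.map e) := by
  obtain ⟨ψ, φ, E, ⟨hψ, hψi⟩, ⟨hφ, hφi⟩, hdisj, hE, hall⟩ := hU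
  have he := U.isHom_map e
  refine ⟨e ∘ ψ, e ∘ φ, fun h => e ∘ E h ∘ e.symm, ⟨he.comp hψ, e.injective.comp hψi⟩,
    ⟨he.comp hφ, e.injective.comp hφi⟩, fun b a h => hdisj b a (e.injective h), ?_, ?_⟩
  · intro h hh hi
    obtain ⟨h1, h2, h3⟩ := hE h hh hi
    exact ⟨he.comp (h1.comp he.symm), e.injective.comp (h2.comp e.symm.injective), fun a => by
      simp [h3]⟩
  · intro g hg hi
    obtain ⟨h, hh, hhi, hgh⟩ := hall (e.symm ∘ g ∘ e) (he.symm.comp (hg.comp he))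
      (e.symm.injective.comp (hi.comp e.injective))
    refine ⟨h, hh, hhi, ?_⟩
    funext x
    simp [← hgh]

end Prescribes

section Parameters

/-- A large integer is `x + 6 * v * m` with `m` free of small prime factors and of about the
size of `x`. -/
lemma exists_modulus (v M : ℕ) : ∃ N, ∀ u ≥ N, ∃ m x, u = x + 6 * v * m ∧ M ≤ m ∧ m ≤ 2 * x ∧
    x < m ∧ ∀ k, 0 < k → k ≤ M → Nat.Coprime k m := by
  set K := M.factorial with hK
  have hKpos : 0 < K := Nat.factorial_pos M
  set D := 12 * v + 1 with hD
  refine ⟨D * (M + K + D * K + 2), fun u hu => ?_⟩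
  set q := 2 * u / D with hq
  have hq1 : M + K + D * K + 2 ≤ q := by
    rw [hq, Nat.le_div_iff_mul_le (by omega)]
    nlinarith
  have hq2 : q * D ≤ 2 * u := Nat.div_mul_le_self _ _
  have hq3 : 2 * u < (q + 1) * D := Nat.lt_mul_of_div_lt (Nat.lt_succ_self q) (by omega)
  set j := (q - 1) / K with hj
  have hj1 : j * K ≤ q - 1 := Nat.div_mul_le_self _ _
  have hj2 : q - 1 < (j + 1) * K := Nat.lt_mul_of_div_lt (Nat.lt_succ_self j) hKpos
  have hm1 : j * K + 1 ≤ q := by omega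
  have hm2 : q + 1 ≤ j * K + 1 + K := by
    rw [Nat.succ_mul] at hj2
    omega
  set m := j * K + 1 with hm
  have h1 : m * D ≤ 2 * u := (Nat.mul_le_mul_right D hm1).trans hq2
  have h2 : 2 * u < (m + K) * D := hq3.trans_le (Nat.mul_le_mul_right D hm2)
  have h3 : 6 * v * m ≤ u := by
    rw [hD] at h1
    nlinarith
  have hDK : D * K < m := by omega
  refine ⟨m, u - 6 * v * m, by omega, by omega, ?_, ?_, ?_⟩
  · zify [h3]
    have h1' : (m : ℤ) * (12 * v + 1) ≤ 2 * u := by exact_mod_cast h1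
    linarith
  · zify [h3]
    have h2' : 2 * (u : ℤ) < (m + K) * (12 * v + 1) := by exact_mod_cast h2
    have h4 : ((12 * v + 1) * K : ℤ) < m := by exact_mod_cast hDK
    linarith
  · intro k hk hkM
    have hdvd : k ∣ j * K := (Nat.dvd_factorial hk hkM).mul_left j
    rw [hm, Nat.coprime_add_iff_right hdvd]
    exact Nat.coprime_one_right k

/-- Divisors of `6 * m` are large or small if `m` has no small prime factor. -/
lemma le_or_mul_le_of_dvd {L M m k : ℕ} (hLM : L ≤ M) (hm : 0 < m)
    (h : ∀ k, 0 < k → k ≤ M → Nat.Coprime k m) (hk : k ∣ 6 * m) : m ≤ k ∨ L * k ≤ 6 * m := by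
  obtain ⟨j, hj⟩ := hk
  rcases le_total L j with hLj | hjL
  · exact Or.inr (by rw [hj, mul_comm k]; exact Nat.mul_le_mul_right k hLj)
  · have hj0 : 0 < j := Nat.pos_of_ne_zero fun h0 => by rw [h0] at hj; omega
    have h6 : j ∣ 6 := (h j hj0 (hjL.trans hLM)).dvd_of_dvd_mul_right ⟨k, by rw [hj, mul_comm]⟩
    have := Nat.le_of_dvd (by norm_num) h6
    exact Or.inl (by nlinarith)

/-- Rigid label sets of all moderate sizes exist in `ℤ/m`. -/
lemma exists_rigid {m n : ℕ} [NeZero m] (hm : 1 < m) (h2 : Nat.Coprime 2 m)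
    (h3 : Nat.Coprime 3 m) (hn : 1 ≤ n) (hnm : n + 4 ≤ m) :
    ∃ (t : ZMod m) (P : Finset (ZMod m)), Rigid t P ∧ #P = n := by
  obtain ⟨t, ht⟩ := exists_half (Nat.coprime_two_left.1 h2)
  have : Fact (1 < m) := ⟨hm⟩
  have h3u : IsUnit (3 : ZMod m) := by
    exact_mod_cast (ZMod.isUnit_iff_coprime 3 m).2 h3
  have h3' : ∀ r : ZMod m, 3 * r = 0 → r = 0 := fun r hr => (h3u.mul_right_eq_zero).1 hr
  have h10 : (1 : ZMod m) ≠ 0 := one_ne_zero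
  set Z : Finset (ZMod m) := {0, -1, t, -t} with hZ
  have h1Z : (1 : ZMod m) ∉ Z := by
    simp only [hZ, Finset.mem_insert, Finset.mem_singleton, not_or]
    refine ⟨h10, fun h => h10 ?_, fun h => h10 ?_, fun h => h10 (h3' 1 ?_)⟩
    · linear_combination t * h - ht
    · linear_combination ht + 2 * h
    · linear_combination 2 * h - ht
  obtain ⟨P, hP1, hP2, hPn⟩ := Finset.exists_subsuperset_card_eq (s := {1}) (t := Zᶜ) (n := n)
    (by simpa using h1Z) (by simpa using hn) (by
      have : #Z ≤ 4 := Finset.card_le_four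
      rw [Finset.card_compl, ZMod.card]
      omega)
  have hnot : ∀ r ∈ Z, r ∉ P := fun r hr hrP => (Finset.mem_compl.1 (hP2 hrP)) hr
  refine ⟨t, P, ⟨ht, hnot _ (by simp [hZ]), hP1 (by simp), hnot _ (by simp [hZ]),
    hnot _ (by simp [hZ]), hnot _ (by simp [hZ]), h10, h3', fun p h0 hs r => ?_⟩, hPn⟩
  have hnat : ∀ k : ℕ, p (k : ZMod m) := fun k => by
    induction k with
    | zero => simpa using h0
    | succ k ih => simpa using hs _ ih
  simpa using hnat r.val

end Parameters

/-- Every large admissible order carries a system containing `W` whose automorphism group is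
that of a given nonempty `V`. -/
theorem exists_prescribes {α β : Type*} [Fintype α] [Nonempty α] [Fintype β] (V : Squag α)
    (W : Squag β) : ∃ N, ∀ u ≥ N, u % 6 = 1 ∨ u % 6 = 3 →
      ∃ U : Squag (Fin u), Prescribes W V U := by
  obtain ⟨N₀, hN₀⟩ := exists_forall_contains W
  obtain ⟨N, hN⟩ := exists_modulus (Fintype.card α) (288 * Fintype.card α + 2 * N₀ + 100)
  refine ⟨N, fun u hu hu6 => ?_⟩
  obtain ⟨m, x, hux, hMm, hmx, hxm, hcop⟩ := hN u hu
  have hx6 : x % 6 = 1 ∨ x % 6 = 3 := by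
    have : u = x + 6 * (Fintype.card α * m) := by rw [hux, mul_assoc]
    omega
  obtain ⟨s, f, hfi, hf⟩ := hN₀ x (by omega) hx6
  have : NeZero m := ⟨by omega⟩
  obtain ⟨t, P, H, hPn⟩ := exists_rigid (m := m) (n := (x - 3) / 2) (by omega)
    (hcop 2 (by omega) (by omega)) (hcop 3 (by omega) (by omega)) (by omega) (by omega)
  have hLab : Fintype.card (Lab P) = x := by
    rw [card_lab, hPn]
    omega
  let ε : Fin x ≃ Lab P := Fintype.equivOfCardEq (by rw [hLab, Fintype.card_fin])
  have hA : Fintype.card ((ZMod 3 × ZMod m) ⊕ (ZMod 3 × ZMod m)) =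
      Fintype.card (ZMod 2 × (ZMod 3 × ZMod m)) := by
    rw [Fintype.card_sum, Fintype.card_prod (ZMod 2), ZMod.card 2, two_mul]
  let _ : AddCommGroup ((ZMod 3 × ZMod m) ⊕ (ZMod 3 × ZMod m)) :=
    (Fintype.equivOfCardEq hA).addCommGroup
  set hY := isHom_labExt_inl (twist (ZMod m)) H.half H.zero_notMem (s.map ε) with hYdef
  have hU : Prescribes W V (moore V hY) := by
    refine ⟨fun b => Sum.inl (ε (f b)), fun v => Sum.inr (v, 0),
      fun h => Sum.map id (Prod.map h id),
      ⟨(isHom_moore_inl V hY).comp ((s.isHom_map ε).comp hf),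
        Sum.inl_injective.comp (ε.injective.comp hfi)⟩,
      ⟨isHom_moore_zero V hY, fun v w h => congrArg Prod.fst (Sum.inr_injective h)⟩,
      fun b v => Sum.inl_ne_inr, fun h hh hi => ⟨isHom_moore_map hY hh hi, ?_, fun v => rfl⟩,
      fun g hg hi => ?_⟩
    · exact Sum.map_injective.2 ⟨Function.injective_id, hi.prodMap Function.injective_id⟩
    · refine H.exists_eq_map (s.map ε) ?_ ?_ ?_ ?_ hg hi
      · rw [ZMod.card]; omega
      · rw [ZMod.card, hLab]; omega
      · rw [ZMod.card, hLab]; omega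
      · rw [ZMod.card]
        exact fun k hk => le_or_mul_le_of_dvd (by omega) (by omega) hcop hk
  refine ⟨_, hU.map (Fintype.equivOfCardEq ?_)⟩
  rw [Fintype.card_sum, hLab, Fintype.card_prod, hA, Fintype.card_prod, Fintype.card_prod,
    ZMod.card, ZMod.card, ZMod.card, Fintype.card_fin, hux]
  ring

section Conversion

variable {α β γ : Type*} [Fintype α] [Fintype γ]

lemma Prescribes.exists_fullEmbedding [Fintype β] [DecidableEq γ] {W : Squag β} {V : Squag α}
    {U : Squag γ} (hU : Prescribes W V U) :
    ∃ (ψ : β → γ) (φ : α → γ), IsCopy W.triples U.triples ψ ∧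
      IsSub U.triples (Finset.univ.image ψ) ∧
      Finset.univ.image ψ ∩ Finset.univ.image φ = ∅ ∧ FullEmbedding V.triples U.triples φ := by
  obtain ⟨ψ, φ, E, ⟨hψ, hψi⟩, ⟨hφ, hφi⟩, hdisj, hE, hall⟩ := hU
  have hres : ∀ g : Equiv.Perm γ, IsAut U.triples g →
      ∃ h : Equiv.Perm α, IsAut V.triples h ∧ (∀ a, g (φ a) = φ (h a)) ∧ ⇑g = E h := by
    intro g hg
    obtain ⟨h, hh, hi, hgh⟩ := hall g ((U.isAut_iff_isHom g).1 hg) g.injective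
    refine ⟨Equiv.ofBijective h (Finite.injective_iff_bijective.1 hi),
      (V.isAut_iff_isHom _).2 hh, fun a => ?_, hgh⟩
    rw [hgh]
    exact (hE h hh hi).2.2 a
  refine ⟨ψ, φ, isCopy_of_isHom hψ hψi, ?_, ?_, isCopy_of_isHom hφ hφi, ?_, ?_, ?_⟩
  · convert isSub_of_isHom hψ
  · rw [Finset.eq_empty_iff_forall_notMem]
    intro x hx
    obtain ⟨h1, h2⟩ := Finset.mem_inter.1 hx
    obtain ⟨b, -, rfl⟩ := Finset.mem_image.1 h1
    obtain ⟨a, -, ha⟩ := Finset.mem_image.1 h2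
    exact hdisj b a ha.symm
  · intro g hg
    obtain ⟨h, -, hgh, -⟩ := hres g hg
    ext x
    simp only [Finset.mem_image, Finset.mem_univ, true_and]
    constructor
    · rintro ⟨_, ⟨a, rfl⟩, rfl⟩
      exact ⟨h a, (hgh a).symm⟩
    · rintro ⟨a, rfl⟩
      exact ⟨φ (h.symm a), ⟨_, rfl⟩, by rw [hgh, h.apply_symm_apply]⟩
  · intro g hg
    obtain ⟨h, hh, hgh, -⟩ := hres g hg
    exact ⟨h, hh, hgh⟩
  · intro h hh
    obtain ⟨h1, h2, h3⟩ := hE h ((V.isAut_iff_isHom h).1 hh) h.injective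
    refine ⟨Equiv.ofBijective (E h) (Finite.injective_iff_bijective.1 h2),
      ⟨(U.isAut_iff_isHom _).2 h1, h3⟩, ?_⟩
    rintro g ⟨hg, hgφ⟩
    obtain ⟨h', -, hgh', hgE⟩ := hres g hg
    have : h' = h := Equiv.ext fun a => hφi ((hgh' a).symm.trans (hgφ a))
    exact DFunLike.coe_injective (by rw [hgE, this]; rfl)

/-- A system with no nontrivial automorphism fully embeds the empty system. -/
lemma fullEmbedding_of_isEmpty [IsEmpty α] {U : Squag γ} (V : Squag α)
    (hU : ∀ g : Equiv.Perm γ, IsAut U.triples g → g = 1) :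
    FullEmbedding V.triples U.triples (isEmptyElim : α → γ) := by
  have hone : IsAut U.triples 1 := (U.isAut_iff_isHom 1).2 fun _ _ => rfl
  refine ⟨isCopy_of_isHom (fun a => isEmptyElim a) fun a => isEmptyElim a, ?_, ?_, ?_⟩
  · intro g _
    simp
  · exact fun g _ => ⟨1, (V.isAut_iff_isHom 1).2 fun _ _ => rfl, fun a => isEmptyElim a⟩
  · exact fun h _ => ⟨1, ⟨hone, fun a => isEmptyElim a⟩, fun g hg => hU g hg.1⟩

lemma Prescribes.eq_one_of_point {W : Squag β} {U : Squag γ} (hU : Prescribes W point U)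
    {g : Equiv.Perm γ} (hg : IsAut U.triples g) : g = 1 := by
  obtain ⟨ψ, φ, E, -, -, -, -, hall⟩ := hU
  obtain ⟨h, -, -, hgE⟩ := hall g ((U.isAut_iff_isHom g).1 hg) g.injective
  obtain ⟨h', -, -, hidE⟩ := hall id (fun _ _ => rfl) Function.injective_id
  exact DFunLike.coe_injective (by rw [hgE, Subsingleton.elim h h', ← hidE]; rfl)

end Conversion

end Squag

/-- **Corollary 4.6.** Given Steiner triple systems `V` and `W`, there is an integer
`N` such that, for `u ≥ N` and `u ≡ 1` or `3 (mod 6)`, there is a Steiner triple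
system `U` on `u` points having a subsystem `W' ≅ W` and an `Aut U`-invariant
subsystem `V'' ≅ V` with `W' ∩ V'' = ∅`, on which `Aut U` induces `Aut V''` with
`Aut U ≅ Aut V''` via restriction. -/
theorem stmt16 {α γ : Type*} [Fintype α] [Fintype γ]
    (TV : Finset (Finset α)) (TW : Finset (Finset γ))
    (hV : IsSTS TV) (hW : IsSTS TW) :
    ∃ N : ℕ, ∀ u : ℕ, N ≤ u → u % 6 = 1 ∨ u % 6 = 3 →
      ∃ T : Finset (Finset (Fin u)), IsSTS T ∧
        ∃ (ψ : γ → Fin u) (φ : α → Fin u),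
          IsCopy TW T ψ ∧ IsSub T (Finset.univ.image ψ) ∧
          Finset.univ.image ψ ∩ Finset.univ.image φ = ∅ ∧
          FullEmbedding TV T φ := by
  obtain ⟨V, rfl⟩ := Squag.exists_of_isSTS hV
  obtain ⟨W, rfl⟩ := Squag.exists_of_isSTS hW
  rcases isEmpty_or_nonempty α with hα | hα
  · obtain ⟨N, hN⟩ := Squag.exists_prescribes Squag.point W
    refine ⟨N, fun u hu hu6 => ?_⟩
    obtain ⟨U, hU⟩ := hN u hu hu6
    obtain ⟨ψ, -, hψ, hsub, -⟩ := hU.exists_fullEmbedding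
    exact ⟨U.triples, U.isSTS_triples, ψ, isEmptyElim, hψ, hsub, by simp,
      Squag.fullEmbedding_of_isEmpty V fun g hg => hU.eq_one_of_point hg⟩
  · obtain ⟨N, hN⟩ := Squag.exists_prescribes V W
    refine ⟨N, fun u hu hu6 => ?_⟩
    obtain ⟨U, hU⟩ := hN u hu hu6
    exact ⟨U.triples, U.isSTS_triples, hU.exists_fullEmbedding⟩

end
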